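/- arXiv:2307.02134 — 2 statements merged into one kernel-verified Lean document; each statement's English description precedes it below -/
import Mathlib

section
/- Let 𝓑 ⊆ ℕ be such that η* is a regular Toeplitz sequence, and let (ℓ_i) be a sequence realizing the lower density of M_𝓑. For K ≥ 1 set η_K := 1_{F_{𝓑_K}} with 𝓑_K = {b ∈ 𝓑 : b ≤ K}, and define η̲_K ∈ {0,1}^ℤ by η̲_K(n) = η*(n) if n ∈ Per(η*, lcm(𝓑*_K)) and η̲_K(n) = 0 otherwise, with 𝓑*_K = {b* ∈ 𝓑* : b* ≤ K}. Then lim_{K→∞} limsup_{i→∞} (1/ℓ_i) |{n ∈ [1,ℓ_i] : (η̲_K(n), η_K(n)) ≠ (η*(n), η(n))}| = 0. -/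
/-!
The pair can differ at `n` for two reasons, and each is controlled by its own density statement.

*First coordinate.* `η̲_K(n) ≠ η*(n)` means that `n` is `𝓑*`-free but not `lcm(𝓑*_K)`-periodic.
For `n` free and `s`-periodic, no `b ∈ 𝓑*` has `gcd(b, s) ∣ n`. As `gcd(b, s)` takes finitely many
values, for large `K` each of them divides `lcm(𝓑*_K)`, and then `n` is `lcm(𝓑*_K)`-periodic too
(`per_transfer`). So, for large `K`, the bad `n` lie outside `⋃_{s ≤ r} Per(η*, s)`, whose density
tends to `1` as `r → ∞` by regularity.

*Second coordinate.* `η_K(n) ≠ η(n)` means `n ∈ M_𝓑 ∖ M_{𝓑_K}`. Along `(ℓ_i)` the set `M_𝓑` has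
frequency equal to its lower density, so it remains to know that the densities of `M_{𝓑_K}` approach
that lower density: the Davenport–Erdős theorem (`davenport_erdos`). It is proved with Dirichlet
densities `P_s(M) = ζ(s)⁻¹ ∑_{n ∈ M} n^(-s)`. Writing
`n^(-s) = ∑_{dm = n} J_{t-s}(d) d^(-t) m^(-t)` with the nonnegative Jordan totient `J` shows that
`P_s(M)` is decreasing in `s` when `M` is closed under multiples (`dirSum_mono`). If the lower
density of `M_𝓑` exceeds `c`, then `P_s(M_𝓑) > c` for some `s > 1`, hence `P_s(M_{𝓑_K}) > c` for some
`K`; letting `s` decrease to `1` bounds the natural density of the periodic set `M_{𝓑_K}` from below.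
-/


open MeasureTheory Filter Topology
open scoped Classical

noncomputable section
namespace BFree


def cnt (A : Set ℤ) (L : ℕ) : ℝ := ∑ n ∈ Finset.Icc (1:ℤ) (L:ℤ), if n ∈ A then (1:ℝ) else 0

def natDensity (A : Set ℤ) (d : ℝ) : Prop := Tendsto (fun L : ℕ => cnt A L / L) atTop (𝓝 d)

def upperDensity (A : Set ℤ) : ℝ := atTop.limsup fun L : ℕ => cnt A L / L

def lowerDensity (A : Set ℤ) : ℝ := atTop.liminf fun L : ℕ => cnt A L / L

def logDensity (A : Set ℤ) (d : ℝ) : Prop :=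
  Tendsto (fun L : ℕ =>
      (∑ n ∈ Finset.Icc (1:ℤ) (L:ℤ), if n ∈ A then (n:ℝ)⁻¹ else 0) / Real.log L)
    atTop (𝓝 d)

def MB (B : Set ℕ) : Set ℤ := {n : ℤ | ∃ b ∈ B, (b:ℤ) ∣ n}

def FB (B : Set ℕ) : Set ℤ := {n : ℤ | n ∉ MB B}

def eta (B : Set ℕ) : ℤ → Bool := fun n => if n ∈ FB B then true else false

def shift (x : ℤ → Bool) : ℤ → Bool := fun n => x (n + 1)

def shiftn (k : ℕ) (x : ℤ → Bool) : ℤ → Bool := fun n => x (n + (k:ℤ))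

def orbitClosure (x : ℤ → Bool) : Set (ℤ → Bool) :=
  closure {y | ∃ m : ℤ, y = fun n => x (n + m)}

def Xeta (B : Set ℕ) : Set (ℤ → Bool) := orbitClosure (eta B)

def InvM (X : Set (ℤ → Bool)) : Set (Measure (ℤ → Bool)) :=
  {μ | IsProbabilityMeasure μ ∧ μ.map shift = μ ∧ μ X = 1}

def primPart (S : Set ℕ) : Set ℕ := {b ∈ S | ∀ b' ∈ S, b' ∣ b → b' = b}

def Dset (B : Set ℕ) : Set ℕ :=
  {d | ∃ A : Set ℕ, A.Infinite ∧ (∀ a ∈ A, 0 < a) ∧ A.Pairwise Nat.Coprime ∧ ∀ a ∈ A, d * a ∈ B}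

def Bstar (B : Set ℕ) : Set ℕ := primPart (B ∪ Dset B)

def etaStar (B : Set ℕ) : ℤ → Bool := eta (Bstar B)

def Behrend (A : Set ℕ) : Prop := (∀ a ∈ A, 0 < a) ∧ logDensity (MB A) 1

def Cset (B : Set ℕ) : Set ℕ := {c | ∃ A : Set ℕ, Behrend A ∧ ∀ a ∈ A, c * a ∈ B}

def Bprime (B : Set ℕ) : Set ℕ := primPart (B ∪ Cset B)

def etaPrime (B : Set ℕ) : ℤ → Bool := eta (Bprime B)

def Taut (B : Set ℕ) : Prop :=
  ∀ b ∈ B, ∃ d1 d2 : ℝ, logDensity (MB (B \ {b})) d1 ∧ logDensity (MB B) d2 ∧ d1 < d2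

def Per (x : ℤ → Bool) (s : ℕ) : Set ℤ := {i | ∀ k : ℤ, x (i + (s:ℤ) * k) = x i}

def IsToeplitz (x : ℤ → Bool) : Prop := ∀ i : ℤ, ∃ s : ℕ, 0 < s ∧ i ∈ Per x s

def RegularToeplitz (x : ℤ → Bool) : Prop :=
  IsToeplitz x ∧ ∃ δ : ℕ → ℝ,
    (∀ r : ℕ, natDensity (⋃ s ∈ Finset.Icc 1 r, Per x s) (δ r)) ∧ Tendsto δ atTop (𝓝 1)

def QuasiGeneric (ℓ : ℕ → ℕ) (x : ℤ → Bool) (ν : Measure (ℤ → Bool)) : Prop :=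
  ∀ f : C((ℤ → Bool), ℝ),
    Tendsto (fun i => (∑ n ∈ Finset.Icc 1 (ℓ i), f (shiftn n x)) / (ℓ i : ℝ)) atTop
      (𝓝 (∫ y, f y ∂ν))

def RealizesLowerDensity (A : Set ℤ) (ℓ : ℕ → ℕ) : Prop :=
  Tendsto ℓ atTop atTop ∧ Tendsto (fun i => cnt A (ℓ i) / (ℓ i : ℝ)) atTop (𝓝 (lowerDensity A))

def IsMirsky (B : Set ℕ) (ν : Measure (ℤ → Bool)) : Prop :=
  IsProbabilityMeasure ν ∧ ∀ ℓ : ℕ → ℕ, RealizesLowerDensity (MB B) ℓ → QuasiGeneric ℓ (eta B) ν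

def blocks (X : Set (ℤ → Bool)) (n : ℕ) : Set (Fin n → Bool) :=
  {w | ∃ x ∈ X, ∃ m : ℤ, ∀ i : Fin n, x (m + (i:ℤ)) = w i}

def pCount (X : Set (ℤ → Bool)) (n : ℕ) : ℕ := (blocks X n).ncard

def topEnt (X : Set (ℤ → Bool)) : ℝ :=
  atTop.limsup fun n : ℕ => Real.logb 2 (pCount X n) / n

def cylinder {n : ℕ} (w : Fin n → Bool) : Set (ℤ → Bool) := {x | ∀ i : Fin n, x ((i:ℕ):ℤ) = w i}

def blockEntropy (μ : Measure (ℤ → Bool)) (n : ℕ) : ℝ :=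
  -∑ w : Fin n → Bool, ((μ (cylinder w)).toReal * Real.logb 2 (μ (cylinder w)).toReal)

def measEnt (μ : Measure (ℤ → Bool)) : ℝ := atTop.liminf fun n : ℕ => blockEntropy μ n / n

/-- `𝓑_K = {b ∈ 𝓑 : b ≤ K}` as a finset. -/
def BKfin (B : Set ℕ) (K : ℕ) : Finset ℕ := (Finset.Icc 1 K).filter (· ∈ B)

/-- `lcm(𝓑*_K)` where `𝓑*_K = {b* ∈ 𝓑* : b* ≤ K}`. -/
def lcmBstarK (B : Set ℕ) (K : ℕ) : ℕ := (BKfin (Bstar B) K).lcm id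

/-- `η_K = 1_{F_{𝓑_K}}`. -/
def etaK (B : Set ℕ) (K : ℕ) : ℤ → Bool := eta {b ∈ B | b ≤ K}

/-- `η̲_K(n) = η*(n)` if `n ∈ Per(η*, lcm(𝓑*_K))`, and `0` otherwise. -/
def etaLowK (B : Set ℕ) (K : ℕ) : ℤ → Bool :=
  fun n => if n ∈ Per (etaStar B) (lcmBstarK B K) then etaStar B n else false

/-! ### Dirichlet densities -/

/-- The Dirichlet sum `∑ n^(-s)` over the positive elements `n = k + 1` of `M`. -/
def dirSum (s : ℝ) (M : Set ℤ) : ℝ :=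
  ∑' k : ℕ, if ((k : ℤ) + 1) ∈ M then ((k : ℝ) + 1) ^ (-s) else 0

lemma cnt_eq_range (A : Set ℤ) (L : ℕ) :
    cnt A L = ∑ k ∈ Finset.range L, if ((k : ℤ) + 1) ∈ A then (1 : ℝ) else 0 := by
  unfold cnt
  induction L with
  | zero => simp
  | succ L ih =>
    rw [Finset.sum_range_succ, ← ih]
    have h : Finset.Icc (1 : ℤ) ((L + 1 : ℕ) : ℤ)
        = insert ((L : ℤ) + 1) (Finset.Icc (1 : ℤ) (L : ℤ)) := by
      ext x; simp only [Finset.mem_Icc, Finset.mem_insert]; push_cast; omega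
    rw [h, Finset.sum_insert (by simp), add_comm]

lemma summable_dirSum {s : ℝ} (hs : 1 < s) (M : Set ℤ) :
    Summable fun k : ℕ => if ((k : ℤ) + 1) ∈ M then ((k : ℝ) + 1) ^ (-s) else 0 := by
  have h : Summable fun k : ℕ => ((k : ℝ) + 1) ^ (-s) := by
    have := (summable_nat_add_iff 1).2 (Real.summable_nat_rpow.2 (show -s < -1 by linarith))
    simpa using this
  refine Summable.of_nonneg_of_le (fun k => ?_) (fun k => ?_) h
  · split_ifs <;> positivity
  · split_ifs
    · exact le_rfl
    · positivity

/-- Abel's inequality: partial sums of `f` bounded below stay bounded below after weighting by a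
nonnegative antitone `w`. -/
lemma abel_lower {f w : ℕ → ℝ} (hw : Antitone w) {C : ℝ}
    (hS : ∀ N, -C ≤ ∑ k ∈ Finset.range N, f k) (hw0 : ∀ k, 0 ≤ w k) (N : ℕ) :
    -C * w 0 ≤ ∑ k ∈ Finset.range N, f k * w k := by
  have key : ∀ N, (∑ k ∈ Finset.range N, f k + C) * w N - C * w 0
      ≤ ∑ k ∈ Finset.range N, f k * w k := by
    intro N
    induction N with
    | zero => simp
    | succ N ih =>
      rw [Finset.sum_range_succ (fun k => f k * w k)]
      have h1 := hS (N + 1)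
      have h2 := hw (Nat.le_succ N)
      have h3 : (∑ k ∈ Finset.range (N + 1), f k + C) * w (N + 1)
          ≤ (∑ k ∈ Finset.range (N + 1), f k + C) * w N :=
        mul_le_mul_of_nonneg_left h2 (by linarith)
      rw [Finset.sum_range_succ f] at h3 ⊢
      linarith
  have h1 := key N
  have h2 : 0 ≤ (∑ k ∈ Finset.range N, f k + C) * w N :=
    mul_nonneg (by linarith [hS N]) (hw0 N)
  linarith

/-- A uniform lower bound on the partial sums of `f` passes to the Dirichlet series weighted by
`(k + 1)^(-s)`; the first weight is `1`, so the constant is unchanged. -/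
lemma abel_tsum {s : ℝ} (hs : 1 < s) {f : ℕ → ℝ} {C : ℝ}
    (hS : ∀ N, -C ≤ ∑ k ∈ Finset.range N, f k)
    (hf : Summable fun k : ℕ => f k * ((k : ℝ) + 1) ^ (-s)) :
    -C ≤ ∑' k : ℕ, f k * ((k : ℝ) + 1) ^ (-s) := by
  refine ge_of_tendsto' hf.hasSum.tendsto_sum_nat fun N => ?_
  have hw : Antitone fun k : ℕ => ((k : ℝ) + 1) ^ (-s) := by
    intro a b hab
    have hab' : (a : ℝ) ≤ b := by exact_mod_cast hab
    exact Real.rpow_le_rpow_of_nonpos (by positivity) (by linarith) (by linarith)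
  have := abel_lower hw hS (fun k => by positivity) N
  simpa using this

lemma dirSum_sub {s : ℝ} (hs : 1 < s) (M : Set ℤ) (c : ℝ) :
    HasSum (fun k : ℕ => ((if ((k : ℤ) + 1) ∈ M then (1 : ℝ) else 0) - c) * ((k : ℝ) + 1) ^ (-s))
      (dirSum s M - c * dirSum s Set.univ) := by
  have h1 := (summable_dirSum hs M).hasSum
  have h2 := (summable_dirSum hs Set.univ).hasSum
  have e : (fun k : ℕ =>
      ((if ((k : ℤ) + 1) ∈ M then (1 : ℝ) else 0) - c) * ((k : ℝ) + 1) ^ (-s))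
      = fun k : ℕ => (if ((k : ℤ) + 1) ∈ M then ((k : ℝ) + 1) ^ (-s) else 0)
        - c * ((k : ℝ) + 1) ^ (-s) := by
    funext k
    split_ifs <;> ring
  simp only [Set.mem_univ, if_true] at h2
  have h3 : dirSum s Set.univ = ∑' k : ℕ, ((k : ℝ) + 1) ^ (-s) := by simp [dirSum]
  rw [e, h3]
  exact h1.sub (h2.mul_left c)

lemma sum_ind_sub (M : Set ℤ) (c : ℝ) (N : ℕ) :
    ∑ k ∈ Finset.range N, ((if ((k : ℤ) + 1) ∈ M then (1 : ℝ) else 0) - c)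
      = cnt M N - c * N := by
  rw [Finset.sum_sub_distrib, ← cnt_eq_range]; simp; ring

lemma dirSum_lower {s : ℝ} (hs : 1 < s) {M : Set ℤ} {c C : ℝ}
    (h : ∀ N : ℕ, c * N - C ≤ cnt M N) : c * dirSum s Set.univ - C ≤ dirSum s M := by
  have := abel_tsum hs (C := C) (fun N => by rw [sum_ind_sub M c]; linarith [h N])
    (dirSum_sub hs M c).summable
  rw [(dirSum_sub hs M c).tsum_eq] at this
  linarith

lemma dirSum_upper {s : ℝ} (hs : 1 < s) {M : Set ℤ} {c C : ℝ}
    (h : ∀ N : ℕ, cnt M N ≤ c * N + C) : dirSum s M ≤ c * dirSum s Set.univ + C := by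
  have hsum := (dirSum_sub hs M c).neg
  simp only [← neg_mul] at hsum
  have := abel_tsum hs (C := C)
    (f := fun k => -((if ((k : ℤ) + 1) ∈ M then (1 : ℝ) else 0) - c))
    (fun N => by rw [Finset.sum_neg_distrib, sum_ind_sub M c]; linarith [h N]) hsum.summable
  rw [hsum.tsum_eq] at this
  linarith

/-- The pole of the zeta function at `1`. -/
lemma dirSum_univ_tendsto : Tendsto (fun s => dirSum s Set.univ) (𝓝[>] 1) atTop := by
  have h := tendsto_sub_mul_tsum_nat_rpow
  rw [tendsto_atTop]
  intro R
  have h1 := h.eventually (lt_mem_nhds (show (1 / 2 : ℝ) < 1 by norm_num))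
  have h2 : ∀ᶠ s : ℝ in 𝓝[>] 1, (s - 1) * R < 1 / 2 := by
    apply eventually_nhdsWithin_of_eventually_nhds
    have : ContinuousAt (fun s : ℝ => (s - 1) * R) 1 := by fun_prop
    exact this.eventually_lt_const (by norm_num)
  filter_upwards [h1, h2, self_mem_nhdsWithin] with s hs1 hs2 hs
  have hs' : (1 : ℝ) < s := hs
  have heq : ∑' n : ℕ, 1 / (n : ℝ) ^ s = dirSum s Set.univ := by
    have hsum : Summable fun n : ℕ => 1 / (n : ℝ) ^ s := Real.summable_one_div_nat_rpow.2 hs'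
    rw [hsum.tsum_eq_zero_add]
    have h0 : (0 : ℝ) ^ s = 0 := Real.zero_rpow (by linarith)
    simp only [dirSum, Set.mem_univ, if_true, Nat.cast_zero, h0, div_zero, zero_add]
    refine tsum_congr fun k => ?_
    rw [Real.rpow_neg (by positivity)]; push_cast; rw [one_div]
  rw [heq] at hs1
  by_contra hR
  push Not at hR
  have : (s - 1) * dirSum s Set.univ ≤ (s - 1) * R :=
    mul_le_mul_of_nonneg_left hR.le (by linarith)
  linarith

lemma dirSum_univ_pos {s : ℝ} (hs : 1 < s) : 0 < dirSum s Set.univ :=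
  (summable_dirSum hs Set.univ).tsum_pos
    (fun k => by split_ifs <;> positivity) 0 (by simp)

/-! ### Monotonicity of the Dirichlet density of a set of multiples -/

/-- Real powers `n ↦ n ^ u` as an arithmetic function; the value at `0` is forced to be `0`. -/
def powAF (u : ℝ) : ArithmeticFunction ℝ := ⟨fun n => if n = 0 then 0 else (n : ℝ) ^ u, by simp⟩

/-- Jordan's totient of real exponent `u`, the Dirichlet convolution `μ * n^u`. -/
def jordan (u : ℝ) : ArithmeticFunction ℝ :=
  ((ArithmeticFunction.moebius : ArithmeticFunction ℤ) : ArithmeticFunction ℝ) * powAF u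

lemma powAF_mult (u : ℝ) : (powAF u).IsMultiplicative := by
  refine ArithmeticFunction.IsMultiplicative.iff_ne_zero.2 ⟨by simp [powAF], ?_⟩
  intro m n hm hn _
  simp only [powAF, ArithmeticFunction.coe_mk, mul_eq_zero, hm, hn, or_self, if_false]
  push_cast
  rw [Real.mul_rpow (by positivity) (by positivity)]

lemma jordan_mult (u : ℝ) : (jordan u).IsMultiplicative :=
  (ArithmeticFunction.isMultiplicative_moebius.intCast).mul (powAF_mult u)

lemma sum_jordan (u : ℝ) {n : ℕ} (hn : n ≠ 0) : ∑ d ∈ n.divisors, jordan u d = (n : ℝ) ^ u := by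
  rw [← ArithmeticFunction.coe_zeta_mul_apply, jordan, ← mul_assoc,
    ArithmeticFunction.coe_zeta_mul_coe_moebius, one_mul]
  simp [powAF, hn]

lemma jordan_nonneg {u : ℝ} (hu : 0 < u) (n : ℕ) : 0 ≤ jordan u n := by
  rcases eq_or_ne n 0 with rfl | hn
  · simp
  rw [ArithmeticFunction.IsMultiplicative.multiplicative_factorization _ (jordan_mult u) hn]
  refine Finset.prod_nonneg fun p hp => ?_
  have hpp : p.Prime := Nat.prime_of_mem_primeFactors (by simpa using hp)
  generalize n.factorization p = k
  cases k with
  | zero => simp [(jordan_mult u).map_one]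
  | succ k =>
    have h1 := sum_jordan u (pow_ne_zero (k + 1) hpp.ne_zero)
    have h2 := sum_jordan u (pow_ne_zero k hpp.ne_zero)
    rw [Nat.sum_divisors_prime_pow hpp] at h1 h2
    rw [Finset.sum_range_succ, h2] at h1
    have h3 : ((p ^ k : ℕ) : ℝ) ^ u ≤ ((p ^ (k + 1) : ℕ) : ℝ) ^ u := by
      apply Real.rpow_le_rpow (by positivity) _ hu.le
      exact_mod_cast Nat.pow_le_pow_right hpp.pos (Nat.le_succ k)
    linarith

/-- `dirSum` with values in `[0, ∞]`, where sums may be rearranged freely. -/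
def dirSumE (s : ℝ) (M : Set ℤ) : ENNReal :=
  ∑' n : ℕ+, if ((n : ℕ) : ℤ) ∈ M then ENNReal.ofReal (((n : ℕ) : ℝ) ^ (-s)) else 0

lemma dirSumE_eq {s : ℝ} (hs : 1 < s) (M : Set ℤ) :
    dirSumE s M = ENNReal.ofReal (dirSum s M) := by
  rw [dirSum, ENNReal.ofReal_tsum_of_nonneg (fun k => by split_ifs <;> positivity)
    (summable_dirSum hs M), dirSumE, tsum_pnat_eq_tsum_succ
    (f := fun n : ℕ => if (n : ℤ) ∈ M then ENNReal.ofReal ((n : ℝ) ^ (-s)) else 0)]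
  refine tsum_congr fun k => ?_
  push_cast
  split_ifs <;> simp

/-- The identity `n^(-s) = ∑_{dm = n} J(d) d^(-t) · m^(-t)` with `J` the Jordan totient of exponent
`t - s`, summed over `M`. -/
lemma dirSumE_conv {s t : ℝ} (hst : s < t) (M : Set ℤ) :
    dirSumE s M = ∑' (d : ℕ+) (m : ℕ+),
      ENNReal.ofReal (jordan (t - s) d * ((d : ℕ) : ℝ) ^ (-t)) *
        (if ((d * m : ℕ) : ℤ) ∈ M then ENNReal.ofReal (((m : ℕ) : ℝ) ^ (-t)) else 0) := by
  set F : ℕ → ℕ → ENNReal := fun d m =>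
    ENNReal.ofReal (jordan (t - s) d * (d : ℝ) ^ (-t)) *
        (if ((d * m : ℕ) : ℤ) ∈ M then ENNReal.ofReal ((m : ℝ) ^ (-t)) else 0) with hF
  have h1 : ∀ n : ℕ+, (if ((n : ℕ) : ℤ) ∈ M then ENNReal.ofReal (((n : ℕ) : ℝ) ^ (-s)) else 0)
      = ∑' x : (n : ℕ).divisorsAntidiagonal, F x.1.1 x.1.2 := by
    intro n
    rw [Finset.tsum_subtype (n : ℕ).divisorsAntidiagonal (fun x => F x.1 x.2)]
    split_ifs with hM
    · have hterm : ∀ x ∈ (n : ℕ).divisorsAntidiagonal, F x.1 x.2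
          = ENNReal.ofReal (jordan (t - s) x.1 * ((n : ℕ) : ℝ) ^ (-t)) := by
        rintro ⟨d, m⟩ hx
        have hx' := (Nat.mem_divisorsAntidiagonal.1 hx).1
        simp only at hx'
        have hM' : ((d * m : ℕ) : ℤ) ∈ M := by rw [hx']; exact hM
        simp only [hF]
        rw [if_pos hM', ← ENNReal.ofReal_mul
          (mul_nonneg (jordan_nonneg (by linarith) _) (by positivity)), ← hx']
        push_cast
        rw [Real.mul_rpow (by positivity) (by positivity), mul_assoc]
      rw [Finset.sum_congr rfl hterm, ← ENNReal.ofReal_sum_of_nonneg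
        (fun x _ => mul_nonneg (jordan_nonneg (by linarith) _) (by positivity)), ← Finset.sum_mul,
        Nat.sum_divisorsAntidiagonal (fun d _ => jordan (t - s) d), sum_jordan _ n.ne_zero,
        ← Real.rpow_add (by exact_mod_cast n.pos)]
      congr 2; ring
    · symm
      refine Finset.sum_eq_zero ?_
      rintro ⟨d, m⟩ hx
      have hx' := (Nat.mem_divisorsAntidiagonal.1 hx).1
      simp only at hx'
      simp only [hF]
      rw [hx', if_neg hM, mul_zero]
  unfold dirSumE
  rw [tsum_congr h1, ← ENNReal.tsum_sigma
      (fun (n : ℕ+) (x : (n : ℕ).divisorsAntidiagonal) => F x.1.1 x.1.2),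
    ← ENNReal.tsum_prod (f := fun d m : ℕ+ => F d m)]
  exact Equiv.tsum_eq sigmaAntidiagonalEquivProd (fun p : ℕ+ × ℕ+ => F p.1 p.2)

/-- The Dirichlet density `dirSum s M / ζ(s)` of a set closed under multiples decreases in `s`. -/
lemma dirSum_mono {s t : ℝ} (hs : 1 < s) (hst : s < t) {M : Set ℤ}
    (hM : ∀ d m : ℤ, m ∈ M → d * m ∈ M) :
    dirSum t M * dirSum s Set.univ ≤ dirSum s M * dirSum t Set.univ := by
  have ht : 1 < t := hs.trans hst
  set J : ENNReal := ∑' d : ℕ+, ENNReal.ofReal (jordan (t - s) d * ((d : ℕ) : ℝ) ^ (-t)) with hJ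
  have h1 : dirSumE s Set.univ = J * dirSumE t Set.univ := by
    rw [dirSumE_conv hst, hJ, ← ENNReal.tsum_mul_right]
    refine tsum_congr fun d => ?_
    rw [ENNReal.tsum_mul_left]; simp [dirSumE]
  have h2 : J * dirSumE t M ≤ dirSumE s M := by
    rw [dirSumE_conv hst, hJ, ← ENNReal.tsum_mul_right]
    refine ENNReal.tsum_le_tsum fun d => ?_
    rw [ENNReal.tsum_mul_left]
    gcongr
    refine ENNReal.tsum_le_tsum fun m => ?_
    split_ifs with h3 h4
    · exact le_rfl
    · exact absurd (by push_cast; exact hM _ _ h3) h4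
    · exact zero_le
    · exact le_rfl
  have h3 : dirSumE t M * dirSumE s Set.univ ≤ dirSumE s M * dirSumE t Set.univ := by
    rw [h1]
    calc dirSumE t M * (J * dirSumE t Set.univ) = J * dirSumE t M * dirSumE t Set.univ := by ring
      _ ≤ _ := by gcongr
  have nn : ∀ r M, 0 ≤ dirSum r M := fun r M => tsum_nonneg fun k => by split_ifs <;> positivity
  rw [dirSumE_eq hs, dirSumE_eq hs, dirSumE_eq ht, dirSumE_eq ht, ← ENNReal.ofReal_mul (nn _ _),
    ← ENNReal.ofReal_mul (nn _ _)] at h3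
  exact (ENNReal.ofReal_le_ofReal_iff (mul_nonneg (nn _ _) (nn _ _))).1 h3

/-! ### The Davenport–Erdős theorem -/

/-- A periodic set has a natural density, with bounded discrepancy. -/
lemma cnt_periodic {M : Set ℤ} {N : ℕ} (hN : 0 < N) (hper : ∀ n : ℤ, n + N ∈ M ↔ n ∈ M) :
    ∃ d C : ℝ, ∀ L : ℕ, |cnt M L - d * L| ≤ C := by
  set d : ℝ := cnt M N / N with hd
  have hN' : (N : ℝ) ≠ 0 := by positivity
  set S : ℕ → ℝ := fun L => cnt M L - d * L with hS
  have hP : Function.Periodic S N := by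
    intro L
    have h1 : cnt M (L + N) = cnt M N + cnt M L := by
      rw [add_comm L N, cnt_eq_range, cnt_eq_range, cnt_eq_range, Finset.sum_range_add]
      congr 1
      refine Finset.sum_congr rfl fun k _ => ?_
      have h2 : ((N + k : ℕ) : ℤ) + 1 = ((k : ℤ) + 1) + N := by push_cast; ring
      rw [h2]
      simp only [hper]
    have h3 : d * N = cnt M N := by rw [hd]; field_simp
    simp only [hS]
    rw [h1]; push_cast; linarith
  refine ⟨d, ∑ r ∈ Finset.range N, |S r|, fun L => ?_⟩
  have h := hP.map_mod_nat L
  change |S L| ≤ _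
  rw [← h]
  exact Finset.single_le_sum (f := fun r => |S r|) (fun r _ => abs_nonneg _)
    (Finset.mem_range.2 (Nat.mod_lt _ hN))

lemma MB_mul {B : Set ℕ} (d m : ℤ) (h : m ∈ MB B) : d * m ∈ MB B := by
  obtain ⟨b, hb, hbm⟩ := h
  exact ⟨b, hb, Dvd.dvd.mul_left hbm d⟩

lemma MB_mono {A B : Set ℕ} (h : A ⊆ B) : MB A ⊆ MB B := fun _ ⟨b, hb, hd⟩ => ⟨b, h hb, hd⟩

lemma MB_periodic {B : Set ℕ} (hB : 0 ∉ B) (K : ℕ) :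
    ∃ d C : ℝ, ∀ L : ℕ, |cnt (MB {b ∈ B | b ≤ K}) L - d * L| ≤ C := by
  refine cnt_periodic (N := K.factorial) K.factorial_pos fun n => ?_
  have hdvd : ∀ b ∈ {b ∈ B | b ≤ K}, (b : ℤ) ∣ (K.factorial : ℤ) := by
    rintro b ⟨hb, hbK⟩
    have : 0 < b := Nat.pos_of_ne_zero fun h => hB (h ▸ hb)
    exact_mod_cast Nat.dvd_factorial this hbK
  constructor
  · rintro ⟨b, hb, h⟩
    exact ⟨b, hb, (dvd_add_left (hdvd b hb)).1 h⟩
  · rintro ⟨b, hb, h⟩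
    exact ⟨b, hb, dvd_add h (hdvd b hb)⟩

lemma cnt_nonneg (A : Set ℤ) (L : ℕ) : 0 ≤ cnt A L :=
  Finset.sum_nonneg fun n _ => by split_ifs <;> norm_num

lemma cnt_mono {A B : Set ℤ} (h : A ⊆ B) (L : ℕ) : cnt A L ≤ cnt B L := by
  refine Finset.sum_le_sum fun n _ => ?_
  split_ifs with h1 h2
  · exact le_rfl
  · exact absurd (h h1) h2
  · norm_num
  · exact le_rfl

/-- Finite truncations exhaust the Dirichlet sum of `M_𝓑`. -/
lemma exists_trunc {B : Set ℕ} {s : ℝ} (hs : 1 < s) {x : ℝ} (hx : x < dirSum s (MB B)) :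
    ∃ K : ℕ, x < dirSum s (MB {b ∈ B | b ≤ K}) := by
  have h1 := (summable_dirSum hs (MB B)).hasSum.tendsto_sum_nat
  obtain ⟨N, hN⟩ := (h1.eventually (lt_mem_nhds hx)).exists
  -- An element of `M_𝓑` in `[1, N]` is already a multiple of some `b ≤ N`.
  refine ⟨N, hN.trans_le ?_⟩
  refine le_trans (Finset.sum_le_sum fun k hk => ?_)
    ((summable_dirSum hs (MB {b ∈ B | b ≤ N})).sum_le_tsum (Finset.range N)
      (fun k _ => by split_ifs <;> positivity))
  split_ifs with h2 h3
  · exact le_rfl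
  · obtain ⟨b, hb, hd⟩ := h2
    refine absurd ⟨b, ⟨hb, ?_⟩, hd⟩ h3
    have := Int.le_of_dvd (by positivity) hd
    have hk' := Finset.mem_range.1 hk
    omega
  · positivity
  · exact le_rfl

lemma lowerDensity_bdd (A : Set ℤ) :
    IsBoundedUnder (· ≥ ·) atTop (fun L : ℕ => cnt A L / L) :=
  isBoundedUnder_of ⟨0, fun L => div_nonneg (cnt_nonneg A L) (by positivity)⟩

/-- The Davenport–Erdős theorem: the lower density of `M_𝓑` is approximated by the densities of the
sets of multiples of finite truncations of `𝓑`. -/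
lemma davenport_erdos {B : Set ℕ} (hB : 0 ∉ B) {c : ℝ} (hc : c < lowerDensity (MB B)) :
    ∃ K : ℕ, ∀ᶠ L : ℕ in atTop, c * L ≤ cnt (MB {b ∈ B | b ≤ K}) L := by
  obtain ⟨c₁, hc₁, h⟩ := exists_between hc
  obtain ⟨c₂, hc₂, hc₂₁⟩ := exists_between hc₁
  have hev := eventually_lt_of_lt_liminf h (lowerDensity_bdd _)
  obtain ⟨L₀, hL₀⟩ := eventually_atTop.1 hev
  -- `cnt` can only fail to exceed `c₁ L` for `L < L₀`, which costs a constant.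
  have hlow : ∀ L : ℕ, c₁ * L - |c₁| * L₀ ≤ cnt (MB B) L := by
    intro L
    rcases le_or_gt L₀ L with hL | hL
    · rcases Nat.eq_zero_or_pos L with rfl | hLp
      · have := cnt_nonneg (MB B) 0
        have : 0 ≤ |c₁| * L₀ := by positivity
        simp; linarith
      have h1 := hL₀ L hL
      rw [lt_div_iff₀ (by exact_mod_cast hLp)] at h1
      have : 0 ≤ |c₁| * L₀ := by positivity
      linarith
    · have h1 : c₁ * L ≤ |c₁| * L := mul_le_mul_of_nonneg_right (le_abs_self _) (by positivity)
      have h2 : |c₁| * L ≤ |c₁| * L₀ :=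
        mul_le_mul_of_nonneg_left (by exact_mod_cast hL.le) (abs_nonneg _)
      linarith [cnt_nonneg (MB B) L]
  obtain ⟨s, hsZ, hs⟩ := ((dirSum_univ_tendsto.eventually_gt_atTop
    (|c₁| * L₀ / (c₁ - c₂))).and self_mem_nhdsWithin).exists
  have hs : (1 : ℝ) < s := hs
  have h1 := dirSum_lower hs hlow
  have h2 : c₂ * dirSum s Set.univ < dirSum s (MB B) := by
    rw [div_lt_iff₀ (by linarith)] at hsZ
    linarith
  obtain ⟨K, hK⟩ := exists_trunc hs h2
  obtain ⟨d, C, hdC⟩ := MB_periodic hB K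
  -- Letting the exponent decrease to `1` can only raise the Dirichlet density of `M_{𝓑_K}`.
  have hc₂d : c₂ ≤ d := by
    by_contra hlt
    push Not at hlt
    obtain ⟨r, ⟨hrZ, hr⟩, hrs⟩ := (((dirSum_univ_tendsto.eventually_gt_atTop
      (C / (c₂ - d))).and self_mem_nhdsWithin).and
        (eventually_nhdsWithin_of_eventually_nhds (eventually_lt_nhds hs))).exists
    have hr : (1 : ℝ) < r := hr
    have h3 := dirSum_mono hr hrs (M := MB {b ∈ B | b ≤ K}) MB_mul
    have h4 : dirSum r (MB {b ∈ B | b ≤ K}) ≤ d * dirSum r Set.univ + C :=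
      dirSum_upper hr fun N => by linarith [(abs_le.1 (hdC N)).2]
    rw [div_lt_iff₀ (by linarith)] at hrZ
    have hZs := dirSum_univ_pos hs
    have hZr := dirSum_univ_pos hr
    have h5 : c₂ * dirSum s Set.univ * dirSum r Set.univ
        < dirSum s (MB {b ∈ B | b ≤ K}) * dirSum r Set.univ := mul_lt_mul_of_pos_right hK hZr
    have h6 : c₂ * dirSum r Set.univ < dirSum r (MB {b ∈ B | b ≤ K}) := by
      refine lt_of_mul_lt_mul_right (a := dirSum s Set.univ) ?_ hZs.le
      calc _ = c₂ * dirSum s Set.univ * dirSum r Set.univ := by ring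
        _ < _ := h5
        _ ≤ _ := h3
    linarith
  refine ⟨K, ?_⟩
  have hlarge := tendsto_natCast_atTop_atTop (R := ℝ) |>.eventually_ge_atTop (C / (c₂ - c))
  filter_upwards [hlarge] with L hL
  rw [div_le_iff₀ (by linarith)] at hL
  have h3 := (abs_le.1 (hdC L)).1
  have h4 : c₂ * L ≤ d * L := mul_le_mul_of_nonneg_right hc₂d (by positivity)
  linarith

/-! ### Periodic positions of `η*` -/

lemma zero_notMem_Bstar {B : Set ℕ} (hB : 0 ∉ B) : 0 ∉ Bstar B := by
  rintro ⟨h | h, -⟩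
  · exact hB h
  · obtain ⟨A, hA, -, -, hmem⟩ := h
    obtain ⟨a, ha⟩ := hA.nonempty
    exact hB (by simpa using hmem a ha)

lemma lcm_dvd_of_mem {B : Set ℕ} (hB : 0 ∉ B) {b K : ℕ} (hb : b ∈ Bstar B) (hbK : b ≤ K) :
    b ∣ lcmBstarK B K := by
  have hpos : 0 < b := Nat.pos_of_ne_zero fun h => zero_notMem_Bstar hB (h ▸ hb)
  have hmem : b ∈ BKfin (Bstar B) K := by simp [BKfin, hb, hbK]; omega
  exact Finset.dvd_lcm (f := id) hmem

/-- A free position that is periodic with period `s` is also periodic with period `lcm(𝓑*_K)` for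
all large `K`: `n + sℤ` avoids the multiples of `b` iff `gcd(b, s) ∤ n`, and
`gcd(b, s)` then divides `gcd(b, lcm(𝓑*_K))`. -/
lemma per_transfer {B : Set ℕ} (hB : 0 ∉ B) {s : ℕ} (hs : 0 < s) :
    ∃ K₀ : ℕ, ∀ K ≥ K₀, ∀ n : ℤ, etaStar B n = true → n ∈ Per (etaStar B) s →
      n ∈ Per (etaStar B) (lcmBstarK B K) := by
  -- Finitely many values of `gcd(b, s)` occur, so they are all attained by bounded `b`.
  have hex : ∃ K₀ : ℕ, ∀ b ∈ Bstar B, ∃ b' ∈ Bstar B, b' ≤ K₀ ∧ b'.gcd s = b.gcd s := by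
    have hg : ∀ g : ℕ, ∃ k : ℕ, (∃ b ∈ Bstar B, b.gcd s = g) →
        ∃ b' ∈ Bstar B, b' ≤ k ∧ b'.gcd s = g := by
      intro g
      by_cases h : ∃ b ∈ Bstar B, b.gcd s = g
      · obtain ⟨b, hb, hbg⟩ := h
        exact ⟨b, fun _ => ⟨b, hb, le_rfl, hbg⟩⟩
      · exact ⟨0, fun h' => absurd h' h⟩
    choose k hk using hg
    refine ⟨(Finset.range (s + 1)).sup k, fun b hb => ?_⟩
    obtain ⟨b', hb', hle, heq⟩ := hk (b.gcd s) ⟨b, hb, rfl⟩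
    refine ⟨b', hb', hle.trans (Finset.le_sup (f := k) ?_), heq⟩
    have := Nat.gcd_le_right b hs
    simp; omega
  obtain ⟨K₀, hK₀⟩ := hex
  refine ⟨K₀, fun K hK n hn hper k => ?_⟩
  have hfree : ∀ m : ℤ, etaStar B m = true ↔ ∀ b ∈ Bstar B, ¬ (b : ℤ) ∣ m := by
    intro m
    simp [etaStar, eta, FB, MB]
  rw [hn, hfree]
  intro b hb hdvd
  obtain ⟨b', hb', hle, heq⟩ := hK₀ b hb
  have hgS : ((b.gcd s : ℕ) : ℤ) ∣ (lcmBstarK B K : ℤ) := by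
    rw [← heq]
    exact_mod_cast (Nat.gcd_dvd_left b' s).trans (lcm_dvd_of_mem hB hb' (hle.trans hK))
  have hgb : ((b.gcd s : ℕ) : ℤ) ∣ (b : ℤ) := by exact_mod_cast Nat.gcd_dvd_left b s
  have hgn : ((b.gcd s : ℕ) : ℤ) ∣ n :=
    (dvd_add_left (Dvd.dvd.mul_right hgS k)).1 (hgb.trans hdvd)
  -- By Bézout some element of `n + sℤ` is a multiple of `b`.
  obtain ⟨q, hq⟩ := hgn
  have hbez := Nat.gcd_eq_gcd_ab b s
  have h1 : (b : ℤ) ∣ n + (s : ℤ) * (-(Nat.gcdB b s) * q) :=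
    ⟨Nat.gcdA b s * q, by rw [hq, hbez]; ring⟩
  have h2 := hper (-(Nat.gcdB b s) * q)
  rw [hn, hfree] at h2
  exact h2 b hb h1

/-! ### The joint approximation -/

/-- for `𝓑` with regular Toeplitz `η*` and `(ℓ_i)` realizing the
lower density of `M_𝓑`,
`lim_K limsup_i (1/ℓ_i)|{n ∈ [1,ℓ_i] : (η̲_K(n), η_K(n)) ≠ (η*(n), η(n))}| = 0`. -/
theorem statement14 (B : Set ℕ) (hB : 0 ∉ B)
    (hreg : RegularToeplitz (etaStar B))
    (ℓ : ℕ → ℕ) (hℓ : RealizesLowerDensity (MB B) ℓ) :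
    Tendsto
      (fun K : ℕ =>
        atTop.limsup fun i : ℕ =>
          (∑ n ∈ Finset.Icc (1:ℤ) (ℓ i : ℤ),
            if (etaLowK B K n, etaK B K n) ≠ (etaStar B n, eta B n) then (1:ℝ) else 0) /
          (ℓ i : ℝ))
      atTop (𝓝 0) := by
  have hnum_nonneg : ∀ K i, 0 ≤ (∑ n ∈ Finset.Icc (1:ℤ) (ℓ i : ℤ),
            if (etaLowK B K n, etaK B K n) ≠ (etaStar B n, eta B n) then (1:ℝ) else 0) /
          (ℓ i : ℝ) := fun K i =>
    div_nonneg (Finset.sum_nonneg fun n _ => by split_ifs <;> norm_num) (by positivity)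
  obtain ⟨-, δ, hδ, hδ1⟩ := hreg
  obtain ⟨hℓt, hℓd⟩ := hℓ
  rw [Metric.tendsto_atTop]
  intro ε hε
  set D := lowerDensity (MB B) with hD
  obtain ⟨r, hr⟩ := (hδ1.eventually (lt_mem_nhds (show 1 - ε / 8 < 1 by linarith))).exists
  set P : Set ℤ := ⋃ s ∈ Finset.Icc 1 r, Per (etaStar B) s with hP
  have hK0 : ∃ K₀ : ℕ, ∀ K ≥ K₀, ∀ n ∈ P, etaStar B n = true →
      n ∈ Per (etaStar B) (lcmBstarK B K) := by
    have hk : ∀ s : ℕ, ∃ k : ℕ, 0 < s → ∀ K ≥ k, ∀ n : ℤ, etaStar B n = true →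
        n ∈ Per (etaStar B) s → n ∈ Per (etaStar B) (lcmBstarK B K) := by
      intro s
      rcases Nat.eq_zero_or_pos s with rfl | hs
      · exact ⟨0, fun h => absurd h (lt_irrefl _)⟩
      · obtain ⟨k, hk⟩ := per_transfer hB hs
        exact ⟨k, fun _ => hk⟩
    choose k hk using hk
    refine ⟨(Finset.Icc 1 r).sup k, fun K hK n hn htrue => ?_⟩
    simp only [hP, Set.mem_iUnion] at hn
    obtain ⟨s, hs, hns⟩ := hn
    exact hk s (by have := (Finset.mem_Icc.1 hs).1; omega) K
      ((Finset.le_sup (f := k) hs).trans hK) n htrue hns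
  obtain ⟨K₀, hK₀⟩ := hK0
  obtain ⟨K₁, hK₁⟩ := davenport_erdos hB (show D - ε / 8 < lowerDensity (MB B) by linarith)
  refine ⟨max K₀ K₁, fun K hK => ?_⟩
  have hKK₀ : K₀ ≤ K := (le_max_left _ _).trans hK
  have hKK₁ : K₁ ≤ K := (le_max_right _ _).trans hK
  have hev : ∀ᶠ i in atTop, (∑ n ∈ Finset.Icc (1:ℤ) (ℓ i : ℤ),
            if (etaLowK B K n, etaK B K n) ≠ (etaStar B n, eta B n) then (1:ℝ) else 0) /
          (ℓ i : ℝ) ≤ ε / 2 := by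
    have e1 := hℓt.eventually ((hδ r).eventually (lt_mem_nhds hr))
    have e2 := hℓt.eventually hK₁
    have e3 := hℓd.eventually (gt_mem_nhds (show D < D + ε / 8 by linarith))
    filter_upwards [e1, e2, e3, hℓt.eventually_gt_atTop 0] with i e1 e2 e3 e4
    have hpos : (0 : ℝ) < ℓ i := by exact_mod_cast e4
    rw [lt_div_iff₀ hpos] at e1
    rw [div_lt_iff₀ hpos] at e3
    rw [div_le_iff₀ hpos]
    have hsub : MB {b ∈ B | b ≤ K₁} ⊆ MB {b ∈ B | b ≤ K} :=
      MB_mono fun b hb => ⟨hb.1, hb.2.trans hKK₁⟩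
    have e5 := cnt_mono hsub (ℓ i)
    have hsum : (∑ n ∈ Finset.Icc (1:ℤ) (ℓ i : ℤ),
            if (etaLowK B K n, etaK B K n) ≠ (etaStar B n, eta B n) then (1:ℝ) else 0)
        ≤ ((ℓ i : ℝ) - cnt P (ℓ i)) + (cnt (MB B) (ℓ i) - cnt (MB {b ∈ B | b ≤ K}) (ℓ i)) := by
      have hcard : (ℓ i : ℝ) = ∑ n ∈ Finset.Icc (1:ℤ) (ℓ i : ℤ), (1 : ℝ) := by simp
      rw [hcard]
      unfold cnt
      rw [← Finset.sum_sub_distrib, ← Finset.sum_sub_distrib, ← Finset.sum_add_distrib]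
      refine Finset.sum_le_sum fun n _ => ?_
      have hincl : n ∈ MB {b ∈ B | b ≤ K} → n ∈ MB B := fun h => MB_mono (fun b hb => hb.1) h
      -- A discrepancy in the first coordinate forces `n ∉ P`, one in the second forces
      -- `n` to lie in `M_𝓑` but not in `M_{𝓑_K}`.
      have hlow : n ∈ P → etaLowK B K n = etaStar B n := by
        intro hn
        unfold etaLowK
        split_ifs with hper
        · rfl
        · cases h : etaStar B n with
          | false => rfl
          | true => exact absurd (hK₀ K hKK₀ n hn h) hper
      have heta : (n ∈ MB {b ∈ B | b ≤ K} ↔ n ∈ MB B) → etaK B K n = eta B n := by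
        intro h
        unfold etaK eta
        exact if_congr (not_congr h) rfl rfl
      by_cases h : n ∈ P ∧ (n ∈ MB {b ∈ B | b ≤ K} ↔ n ∈ MB B)
      · rw [if_neg (by simp [hlow h.1, heta h.2])]
        simp [h.1, h.2]
      · have hone : ∀ (p : Prop) [Decidable p], (if p then (1 : ℝ) else 0) ≤ 1 :=
          fun p _ => by split_ifs <;> norm_num
        refine (hone _).trans ?_
        by_cases hp : n ∈ P
        · have h1 : n ∉ MB {b ∈ B | b ≤ K} := fun h1 => h ⟨hp, fun _ => hincl h1, fun _ => h1⟩
          have h2 : n ∈ MB B := by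
            by_contra h2
            exact h ⟨hp, iff_of_false h1 h2⟩
          rw [if_pos hp, if_neg h1, if_pos h2]; norm_num
        · rw [if_neg hp]
          by_cases h1 : n ∈ MB {b ∈ B | b ≤ K}
          · rw [if_pos h1, if_pos (hincl h1)]; norm_num
          · rw [if_neg h1]
            split_ifs <;> norm_num
    nlinarith
  have hle := limsup_le_of_le (isCoboundedUnder_le_of_le atTop (hnum_nonneg K)) hev
  have hge := le_limsup_of_frequently_le (Frequently.of_forall (f := atTop) (hnum_nonneg K))
    (isBoundedUnder_of_eventually_le hev)
  rw [Real.dist_eq, sub_zero, abs_of_nonneg hge]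
  linarith

end BFree
end
end

section
/- For any 𝓑 ⊆ ℕ with η' ≠ η*, one has d̄(F_𝓑) > d̄(F_{𝓑*}), where d̄ denotes upper natural density. -/
/-!
Write `Fn B` for the `B`-free natural numbers and `Ps F s` for the probability of `F` under the zeta
distribution `n ↦ n ^ (-s) / ζ(s)`, `s > 1`. Everything rests on the four functions theorem on `ℕ`
ordered by divisibility (`four_tsum`). For divisor-closed `F`, such as `Fn B`, it gives that
`Ps F s` increases with `s` (`Ps_mono`), so that `Ps F s` has the limit `Lz F = inf Ps F s` as
`s → 1`, and that divisor-closed sets are positively correlated (`Ps_inter`), so that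
`Lz F * Lz G ≤ Lz (F ∩ G)`.

Monotonicity yields the Davenport-Erdős theorem in the form `upper density of Fn B = Lz (Fn B)`
(`upper_Fn`): partial summation gives `≥`, and for `≤` one truncates `B` to a finite set, whose free
set is periodic with density at most every one of its zeta probabilities, and lets the truncation
grow with `s` fixed. Rankin's trick shows that `A` is Behrend if `Lz (Fn A) = 0` (`behrend_of_Lz`).

A Behrend set without `1` contains an infinite pairwise coprime set (`exists_coprime`), hence
`MB (B ∪ Cset B) ⊆ MB (B ∪ Dset B)`. If the two sequences differ, the inclusion is strict, and some
`d ∈ B ∪ Dset B` is not a multiple of any `c ∈ Cset B`. For every `e ∣ d`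
the set `{a | e * a ∈ B}` is then not Behrend, so its free set has positive `Lz`, and by positive
correlation so does the intersection of these finitely many free sets. That intersection lies in
`{m | d * m ∈ Fn B}`, so the `B`-free multiples of `d` carry positive mass in the limit, and
`Lz (Fn (B ∪ {d})) < Lz (Fn B)` (`Lz_lt`). The left side bounds the upper density of
`FB (Bstar B)`.
-/

open MeasureTheory Filter Topology
open scoped Classical

noncomputable section
namespace BFree


/-! ### Zeta distributions and divisor-closed sets -/

/-- The natural numbers as a distributive lattice under divisibility, with meet `gcd` and join
`lcm`. It is a plain definition, so that it does not compete with the usual order. -/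
@[reducible]
def dvdLattice : DistribLattice ℕ where
  le a b := a ∣ b
  lt a b := a ∣ b ∧ ¬ b ∣ a
  lt_iff_le_not_ge _ _ := Iff.rfl
  le_refl := dvd_refl
  le_trans _ _ _ := dvd_trans
  le_antisymm _ _ := Nat.dvd_antisymm
  sup := Nat.lcm
  inf := Nat.gcd
  le_sup_left := Nat.dvd_lcm_left
  le_sup_right := Nat.dvd_lcm_right
  sup_le _ _ _ := Nat.lcm_dvd
  inf_le_left := Nat.gcd_dvd_left
  inf_le_right := Nat.gcd_dvd_right
  le_inf _ _ _ := Nat.dvd_gcd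
  le_sup_inf x y z := by
    change Nat.gcd (Nat.lcm x y) (Nat.lcm x z) ∣ Nat.lcm x (Nat.gcd y z)
    rcases Nat.eq_zero_or_pos x with rfl | hx
    · simp
    rcases Nat.eq_zero_or_pos y with rfl | hy
    · simp
    rcases Nat.eq_zero_or_pos z with rfl | hz
    · simp
    have hxy : Nat.lcm x y ≠ 0 := Nat.lcm_ne_zero hx.ne' hy.ne'
    have hxz : Nat.lcm x z ≠ 0 := Nat.lcm_ne_zero hx.ne' hz.ne'
    have hyz : Nat.gcd y z ≠ 0 := (Nat.gcd_pos_of_pos_left _ hy).ne'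
    rw [← Nat.factorization_le_iff_dvd (Nat.gcd_pos_of_pos_left _ (Nat.pos_of_ne_zero hxy)).ne'
      (Nat.lcm_ne_zero hx.ne' hyz), Nat.factorization_gcd hxy hxz,
      Nat.factorization_lcm hx.ne' hy.ne', Nat.factorization_lcm hx.ne' hz.ne',
      Nat.factorization_lcm hx.ne' hyz, Nat.factorization_gcd hy.ne' hz.ne']
    intro p
    simp only [Finsupp.inf_apply, Finsupp.sup_apply]
    rw [sup_inf_left]

/-- The four functions theorem for series over the divisibility lattice. -/
theorem four_tsum {f₁ f₂ f₃ f₄ : ℕ → ℝ} (h₁ : 0 ≤ f₁) (h₂ : 0 ≤ f₂) (h₃ : 0 ≤ f₃) (h₄ : 0 ≤ f₄)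
    (s₁ : Summable f₁) (s₂ : Summable f₂) (s₃ : Summable f₃) (s₄ : Summable f₄)
    (h : ∀ a b, f₁ a * f₂ b ≤ f₃ (Nat.gcd a b) * f₄ (Nat.lcm a b)) :
    (∑' n, f₁ n) * (∑' n, f₂ n) ≤ (∑' n, f₃ n) * (∑' n, f₄ n) := by
  refine le_of_tendsto (s₁.tendsto_sum_tsum_nat.mul s₂.tendsto_sum_tsum_nat)
    (Eventually.of_forall fun N => ?_)
  refine (@four_functions_theorem ℕ ℝ dvdLattice _ _ _ _ f₁ f₂ f₃ f₄ _ h₁ h₂ h₃ h₄ h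
    (Finset.range N) (Finset.range N)).trans ?_
  exact mul_le_mul (s₃.sum_le_tsum _ fun i _ => h₃ i) (s₄.sum_le_tsum _ fun i _ => h₄ i)
    (Finset.sum_nonneg fun i _ => h₄ i) (tsum_nonneg h₃)

/-- The Dirichlet series `∑_{n ∈ F} n ^ (-s)`. The term at `n = 0` vanishes since `s ≠ 0` wherever
this is used. -/
def Zs (F : Set ℕ) (s : ℝ) : ℝ := ∑' n : ℕ, F.indicator (fun n : ℕ => (n : ℝ) ^ (-s)) n

/-- The probability of `F` under the zeta distribution with parameter `s`. -/
def Ps (F : Set ℕ) (s : ℝ) : ℝ := Zs F s / Zs Set.univ s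

/-- The infimum over `s > 1` of the zeta probabilities of `F`. -/
def Lz (F : Set ℕ) : ℝ := sInf (Ps F '' Set.Ioi 1)

/-- Closure under passing to divisors. -/
def DivClosed (F : Set ℕ) : Prop := ∀ a b, b ∈ F → a ∣ b → a ∈ F

lemma ind_nonneg (F : Set ℕ) (s : ℝ) : 0 ≤ F.indicator (fun n : ℕ => (n : ℝ) ^ (-s)) :=
  fun n => Set.indicator_nonneg (fun n _ => Real.rpow_nonneg (Nat.cast_nonneg n) _) n

lemma ind_summable (F : Set ℕ) {s : ℝ} (hs : 1 < s) :
    Summable (F.indicator (fun n : ℕ => (n : ℝ) ^ (-s))) :=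
  (Real.summable_nat_rpow.2 (by linarith)).indicator F

lemma Zs_nonneg (F : Set ℕ) (s : ℝ) : 0 ≤ Zs F s := tsum_nonneg (ind_nonneg F s)

lemma Zs_mono {F G : Set ℕ} (h : F ⊆ G) {s : ℝ} (hs : 1 < s) : Zs F s ≤ Zs G s :=
  (ind_summable F hs).tsum_le_tsum (fun n => Set.indicator_le_indicator_of_subset h
    (fun n => Real.rpow_nonneg (Nat.cast_nonneg n) _) n) (ind_summable G hs)

lemma Zs_univ_pos {s : ℝ} (hs : 1 < s) : 0 < Zs Set.univ s :=
  (ind_summable _ hs).tsum_pos (ind_nonneg _ s) 1 (by simp)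

lemma Ps_nonneg (F : Set ℕ) (s : ℝ) : 0 ≤ Ps F s := div_nonneg (Zs_nonneg _ _) (Zs_nonneg _ _)

lemma Ps_mono_set {F G : Set ℕ} (h : F ⊆ G) {s : ℝ} (hs : 1 < s) : Ps F s ≤ Ps G s :=
  div_le_div_of_nonneg_right (Zs_mono h hs) (Zs_nonneg _ _)

lemma Ps_univ {s : ℝ} (hs : 1 < s) : Ps Set.univ s = 1 := div_self (Zs_univ_pos hs).ne'

lemma Zs_compl (F : Set ℕ) {s : ℝ} (hs : 1 < s) : Zs F s + Zs Fᶜ s = Zs Set.univ s := by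
  rw [Zs, Zs, ← (ind_summable F hs).tsum_add (ind_summable Fᶜ hs), Zs]
  congr 1
  funext n
  simp

lemma Ps_compl (F : Set ℕ) {s : ℝ} (hs : 1 < s) : Ps F s + Ps Fᶜ s = 1 := by
  rw [Ps, Ps, ← add_div, Zs_compl F hs, div_self (Zs_univ_pos hs).ne']

/-- For divisor-closed sets, the zeta probability increases with the parameter. In the four functions
inequality the factor `m ^ (-(t - s))` moves from `b` to the smaller number `gcd a b`. -/
lemma Ps_mono {F : Set ℕ} (hF : DivClosed F) {s t : ℝ} (hs : 1 < s) (hst : s ≤ t) :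
    Ps F s ≤ Ps F t := by
  have ht : 1 < t := hs.trans_le hst
  rw [Ps, Ps, div_le_div_iff₀ (Zs_univ_pos hs) (Zs_univ_pos ht)]
  refine four_tsum (ind_nonneg _ _) (ind_nonneg _ _) (ind_nonneg _ _) (ind_nonneg _ _)
    (ind_summable _ hs) (ind_summable _ ht) (ind_summable _ ht) (ind_summable _ hs) ?_
  intro a b
  by_cases ha : a ∈ F
  swap
  · rw [Set.indicator_of_notMem ha, zero_mul]
    exact mul_nonneg (ind_nonneg _ _ _) (ind_nonneg _ _ _)
  have hg : Nat.gcd a b ∈ F := hF _ _ ha (Nat.gcd_dvd_left a b)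
  rw [Set.indicator_of_mem ha, Set.indicator_of_mem hg, Set.indicator_of_mem (Set.mem_univ _),
    Set.indicator_of_mem (Set.mem_univ _)]
  rcases Nat.eq_zero_or_pos b with rfl | hb
  · rw [Nat.cast_zero, Real.zero_rpow (by linarith), mul_zero]; positivity
  have hgp : 0 < Nat.gcd a b := Nat.gcd_pos_of_pos_right _ hb
  have e1 : ∀ m : ℕ, 0 < m → (m : ℝ) ^ (-t) = (m : ℝ) ^ (-s) * (m : ℝ) ^ (-(t - s)) := by
    intro m hm
    rw [← Real.rpow_add (by exact_mod_cast hm)]; congr 1; ring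
  have e2 : ((Nat.gcd a b : ℕ) : ℝ) ^ (-s) * ((Nat.lcm a b : ℕ) : ℝ) ^ (-s)
      = (a : ℝ) ^ (-s) * (b : ℝ) ^ (-s) := by
    rw [← Real.mul_rpow (by positivity) (by positivity),
      ← Real.mul_rpow (by positivity) (by positivity)]
    norm_cast
    rw [Nat.gcd_mul_lcm]
  have e3 : (b : ℝ) ^ (-(t - s)) ≤ ((Nat.gcd a b : ℕ) : ℝ) ^ (-(t - s)) :=
    Real.rpow_le_rpow_of_nonpos (by exact_mod_cast hgp)
      (by exact_mod_cast Nat.gcd_le_right a hb) (by linarith)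
  calc (a : ℝ) ^ (-s) * (b : ℝ) ^ (-t)
      = ((a : ℝ) ^ (-s) * (b : ℝ) ^ (-s)) * (b : ℝ) ^ (-(t - s)) := by rw [e1 b hb]; ring
    _ ≤ ((a : ℝ) ^ (-s) * (b : ℝ) ^ (-s)) * ((Nat.gcd a b : ℕ) : ℝ) ^ (-(t - s)) := by
        gcongr
    _ = _ := by rw [← e2, e1 _ hgp]; ring

/-- Divisor-closed sets are positively correlated under the zeta distributions. -/
lemma Ps_inter {F G : Set ℕ} (hF : DivClosed F) (hG : DivClosed G) {s : ℝ} (hs : 1 < s) :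
    Ps F s * Ps G s ≤ Ps (F ∩ G) s := by
  have hz := Zs_univ_pos hs
  have key : Zs F s * Zs G s ≤ Zs (F ∩ G) s * Zs Set.univ s := by
    refine four_tsum (ind_nonneg _ _) (ind_nonneg _ _) (ind_nonneg _ _) (ind_nonneg _ _)
      (ind_summable _ hs) (ind_summable _ hs) (ind_summable _ hs) (ind_summable _ hs) ?_
    intro a b
    by_cases ha : a ∈ F
    swap
    · rw [Set.indicator_of_notMem ha, zero_mul]
      exact mul_nonneg (ind_nonneg _ _ _) (ind_nonneg _ _ _)
    by_cases hb : b ∈ G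
    swap
    · rw [Set.indicator_of_notMem hb, mul_zero]
      exact mul_nonneg (ind_nonneg _ _ _) (ind_nonneg _ _ _)
    have hg : Nat.gcd a b ∈ F ∩ G :=
      ⟨hF _ _ ha (Nat.gcd_dvd_left a b), hG _ _ hb (Nat.gcd_dvd_right a b)⟩
    rw [Set.indicator_of_mem ha, Set.indicator_of_mem hb, Set.indicator_of_mem hg,
      Set.indicator_of_mem (Set.mem_univ _)]
    rw [← Real.mul_rpow (by positivity) (by positivity),
      ← Real.mul_rpow (by positivity) (by positivity)]
    norm_cast
    rw [Nat.gcd_mul_lcm]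
  rw [Ps, Ps, Ps, div_mul_div_comm, div_le_div_iff₀ (mul_pos hz hz) hz]
  nlinarith

lemma Lz_bdd (F : Set ℕ) : BddBelow (Ps F '' Set.Ioi 1) :=
  ⟨0, by rintro _ ⟨s, _, rfl⟩; exact Ps_nonneg F s⟩

lemma Lz_le (F : Set ℕ) {s : ℝ} (hs : 1 < s) : Lz F ≤ Ps F s :=
  csInf_le (Lz_bdd F) ⟨s, hs, rfl⟩

lemma le_Lz {F : Set ℕ} {c : ℝ} (h : ∀ s, 1 < s → c ≤ Ps F s) : c ≤ Lz F :=
  le_csInf ⟨_, 2, by simp, rfl⟩ (by rintro _ ⟨s, hs, rfl⟩; exact h s hs)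

lemma Lz_nonneg (F : Set ℕ) : 0 ≤ Lz F := le_Lz fun s _ => Ps_nonneg F s

lemma Lz_mono {F G : Set ℕ} (h : F ⊆ G) : Lz F ≤ Lz G :=
  le_Lz fun _ hs => (Lz_le F hs).trans (Ps_mono_set h hs)

/-- By monotonicity in the parameter, the infimum `Lz F` is the limit as `s` decreases to `1`. -/
lemma Ps_tendsto {F : Set ℕ} (hF : DivClosed F) : Tendsto (Ps F) (𝓝[>] 1) (𝓝 (Lz F)) := by
  rw [tendsto_order]
  constructor
  · intro c hc
    filter_upwards [self_mem_nhdsWithin] with s hs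
    exact hc.trans_le (Lz_le F hs)
  · intro c hc
    obtain ⟨_, ⟨t, ht, rfl⟩, htc⟩ := exists_lt_of_csInf_lt
      (⟨_, 2, by simp, rfl⟩ : (Ps F '' Set.Ioi 1).Nonempty) hc
    filter_upwards [Ioc_mem_nhdsGT ht] with s hs
    exact (Ps_mono hF hs.1 hs.2).trans_lt htc

lemma Lz_inter {F G : Set ℕ} (hF : DivClosed F) (hG : DivClosed G) :
    Lz F * Lz G ≤ Lz (F ∩ G) :=
  le_Lz fun _ hs => (mul_le_mul (Lz_le F hs) (Lz_le G hs) (Lz_nonneg G) (Ps_nonneg F _)).trans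
    (Ps_inter hF hG hs)

lemma divClosed_biInter {ι : Type*} (S : Finset ι) (F : ι → Set ℕ) (h : ∀ i ∈ S, DivClosed (F i)) :
    DivClosed (⋂ i ∈ S, F i) := by
  intro a b hb hab
  simp only [Set.mem_iInter] at hb ⊢
  exact fun i hi => h i hi a b (hb i hi) hab

lemma Lz_univ : Lz Set.univ = 1 := by
  refine le_antisymm ((Lz_le _ one_lt_two).trans_eq (Ps_univ one_lt_two)) ?_
  exact le_Lz fun s hs => (Ps_univ hs).ge

lemma Lz_biInter_pos {ι : Type*} (S : Finset ι) (F : ι → Set ℕ) (h : ∀ i ∈ S, DivClosed (F i))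
    (hp : ∀ i ∈ S, 0 < Lz (F i)) : 0 < Lz (⋂ i ∈ S, F i) := by
  classical
  induction S using Finset.induction_on with
  | empty => simp [Lz_univ]
  | insert a S ha ih =>
    rw [Finset.set_biInter_insert]
    have h' : ∀ i ∈ S, DivClosed (F i) := fun i hi => h i (Finset.mem_insert_of_mem hi)
    refine lt_of_lt_of_le (mul_pos (hp a (Finset.mem_insert_self _ _))
      (ih h' fun i hi => hp i (Finset.mem_insert_of_mem hi)))
      (Lz_inter (h a (Finset.mem_insert_self _ _)) (divClosed_biInter S F h'))

lemma Zs_univ_asymp : Tendsto (fun s : ℝ => (s - 1) * Zs Set.univ s) (𝓝[>] 1) (𝓝 1) := by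
  refine tendsto_sub_mul_tsum_nat_rpow.congr fun s => ?_
  rw [Zs]
  congr 2
  funext n
  simp [Real.rpow_neg]

lemma inv_Zs_tendsto : Tendsto (fun s : ℝ => (Zs Set.univ s)⁻¹) (𝓝[>] 1) (𝓝 0) := by
  have h1 : Tendsto (fun s : ℝ => s - 1) (𝓝[>] 1) (𝓝 0) :=
    (Continuous.tendsto' (by fun_prop) _ _ (by norm_num)).mono_left nhdsWithin_le_nhds
  have h2 := h1.mul (Zs_univ_asymp.inv₀ one_ne_zero)
  rw [zero_mul] at h2
  refine h2.congr' ?_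
  filter_upwards [self_mem_nhdsWithin] with s hs
  have : s - 1 ≠ 0 := sub_ne_zero.2 (ne_of_gt hs)
  have h3 := (Zs_univ_pos hs).ne'
  field_simp

/-! ### Upper density and the zeta limit -/

/-- The number of `n ∈ F` with `1 ≤ n ≤ N`. -/
def ct (F : Set ℕ) (N : ℕ) : ℝ := ∑ n ∈ Finset.range N, F.indicator (fun _ => (1 : ℝ)) (n + 1)

lemma Zs_eq (F : Set ℕ) {s : ℝ} (hs : 1 < s) :
    Tendsto (fun N => ∑ n ∈ Finset.range N,
      F.indicator (fun _ => (1 : ℝ)) (n + 1) * ((n : ℝ) + 1) ^ (-s)) atTop (𝓝 (Zs F s)) := by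
  have h := ((ind_summable F hs).tendsto_sum_tsum_nat).comp (tendsto_add_atTop_nat 1)
  refine h.congr fun N => ?_
  rw [Function.comp_apply, Finset.sum_range_succ']
  have h0 : F.indicator (fun n : ℕ => (n : ℝ) ^ (-s)) 0 = 0 := by
    by_cases h : 0 ∈ F
    · rw [Set.indicator_of_mem h, Nat.cast_zero, Real.zero_rpow (by linarith)]
    · rw [Set.indicator_of_notMem h]
  rw [h0, add_zero]
  refine Finset.sum_congr rfl fun n _ => ?_
  by_cases h : n + 1 ∈ F
  · simp [h]
  · simp [h]

/-- Partial summation: a linear bound for the counting function bounds the Dirichlet series. -/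
lemma Zs_le {F : Set ℕ} {c C : ℝ} (h : ∀ N, ct F N ≤ c * N + C) {s : ℝ}
    (hs : 1 < s) : Zs F s ≤ c * Zs Set.univ s + C := by
  set a : ℕ → ℝ := fun n => F.indicator (fun _ => (1 : ℝ)) (n + 1) - c with ha
  set w : ℕ → ℝ := fun n => ((n : ℝ) + 1) ^ (-s) with hw
  have hA : ∀ N, ∑ n ∈ Finset.range N, a n ≤ C := by
    intro N
    have := h N
    simp only [ha, Finset.sum_sub_distrib, Finset.sum_const, Finset.card_range, nsmul_eq_mul]
    rw [ct] at this
    linarith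
  have hanti : ∀ n, w (n + 1) ≤ w n := fun n =>
    Real.rpow_le_rpow_of_nonpos (by positivity) (by push_cast; linarith) (by linarith)
  have hpos : ∀ n, 0 ≤ w n := fun n => by positivity
  have h0 : w 0 = 1 := by simp [hw]
  -- The factor `partial sum - C` is nonpositive, so decreasing the weight only increases the bound.
  have claim : ∀ N, ∑ n ∈ Finset.range N, a n * w n
      ≤ (∑ n ∈ Finset.range N, a n - C) * w N + C := by
    intro N
    induction N with
    | zero => simp [h0]
    | succ N ih =>
      have h1 := hA (N + 1)
      rw [Finset.sum_range_succ] at h1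
      rw [Finset.sum_range_succ, Finset.sum_range_succ]
      nlinarith [hanti N]
  have hlim := (Zs_eq F hs).sub ((Zs_eq Set.univ hs).const_mul c)
  have : Zs F s - c * Zs Set.univ s ≤ C := by
    refine le_of_tendsto hlim (Eventually.of_forall fun N => ?_)
    have h2 := claim N
    have h3 : ∑ n ∈ Finset.range N, a n * w n =
      ∑ n ∈ Finset.range N, F.indicator (fun _ => (1 : ℝ)) (n + 1) * w n
        - c * ∑ n ∈ Finset.range N, Set.univ.indicator (fun _ => (1 : ℝ)) (n + 1) * w n := by
      rw [Finset.mul_sum, ← Finset.sum_sub_distrib]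
      refine Finset.sum_congr rfl fun n _ => ?_
      simp only [ha, Set.indicator_univ]; ring
    rw [← h3]
    nlinarith [hA N, hpos N]
  linarith

lemma Ps_le {F : Set ℕ} {c C : ℝ} (h : ∀ N, ct F N ≤ c * N + C) {s : ℝ}
    (hs : 1 < s) : Ps F s ≤ c + C * (Zs Set.univ s)⁻¹ := by
  have hz := Zs_univ_pos hs
  rw [Ps, div_le_iff₀ hz, add_mul, mul_assoc, inv_mul_cancel₀ hz.ne', mul_one]
  exact Zs_le h hs

lemma bound_tendsto (c C : ℝ) :
    Tendsto (fun s => c + C * (Zs Set.univ s)⁻¹) (𝓝[>] 1) (𝓝 c) := by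
  simpa using (inv_Zs_tendsto.const_mul C).const_add c

lemma Lz_le_of_ct {F : Set ℕ} {c C : ℝ} (h : ∀ N, ct F N ≤ c * N + C) : Lz F ≤ c := by
  refine ge_of_tendsto (bound_tendsto c C) ?_
  filter_upwards [self_mem_nhdsWithin] with s hs
  exact (Lz_le F hs).trans (Ps_le h hs)

lemma ct_nonneg (F : Set ℕ) (N : ℕ) : 0 ≤ ct F N :=
  Finset.sum_nonneg fun _ _ => Set.indicator_nonneg (fun _ _ => zero_le_one) _

lemma ct_le (F : Set ℕ) (N : ℕ) : ct F N ≤ N := by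
  calc ct F N ≤ ∑ n ∈ Finset.range N, (1 : ℝ) :=
        Finset.sum_le_sum fun n _ => Set.indicator_le_self' (fun _ _ => zero_le_one) _
    _ = N := by simp

lemma ct_mono {F G : Set ℕ} (h : F ⊆ G) (N : ℕ) : ct F N ≤ ct G N :=
  Finset.sum_le_sum fun _ _ => Set.indicator_le_indicator_of_subset h (fun _ => zero_le_one) _

lemma ct_add_compl (F : Set ℕ) (N : ℕ) : ct F N + ct Fᶜ N = N := by
  rw [ct, ct, ← Finset.sum_add_distrib]
  simp

/-- The counting function of a periodic set is linear up to a bounded error. -/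
lemma ct_periodic {F : Set ℕ} {q : ℕ} (hq : 0 < q) (hF : ∀ n, n + q ∈ F ↔ n ∈ F) (N : ℕ) :
    ct F N ≤ ct F q / q * N + q := by
  have hmul : ∀ k r, ct F (q * k + r) = k * ct F q + ct F r := by
    intro k
    induction k with
    | zero => simp
    | succ k ih =>
      intro r
      have e : q * (k + 1) + r = q + (q * k + r) := by ring
      have e2 : ∀ m, ct F (q + m) = ct F q + ct F m := by
        intro m
        rw [ct, Finset.sum_range_add, ct, ct]
        congr 1
        refine Finset.sum_congr rfl fun n _ => ?_
        have : q + n + 1 = (n + 1) + q := by ring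
        rw [this]
        by_cases h : n + 1 ∈ F
        · rw [Set.indicator_of_mem h, Set.indicator_of_mem ((hF _).2 h)]
        · rw [Set.indicator_of_notMem h, Set.indicator_of_notMem (fun h' => h ((hF _).1 h'))]
      rw [e, e2, ih]; push_cast; ring
  have hN := hmul (N / q) (N % q)
  rw [Nat.div_add_mod] at hN
  have h1 : ((N / q : ℕ) : ℝ) ≤ (N : ℝ) / q := Nat.cast_div_le
  have h2 : ct F (N % q) ≤ q := (ct_le _ _).trans (by exact_mod_cast (Nat.mod_lt N hq).le)
  rw [hN, div_mul_eq_mul_div, mul_comm (ct F q), mul_div_right_comm]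
  have := mul_le_mul_of_nonneg_right h1 (ct_nonneg F q)
  linarith

/-- The period average of a periodic divisor-closed set is at most all its zeta probabilities. -/
lemma avg_le_Ps {F : Set ℕ} (hd : DivClosed F) {q : ℕ} (hq : 0 < q)
    (hF : ∀ n, n + q ∈ F ↔ n ∈ F) {s : ℝ} (hs : 1 < s) : ct F q / q ≤ Ps F s := by
  refine le_trans ?_ (Lz_le F hs)
  have hq' : (0 : ℝ) < q := by exact_mod_cast hq
  have hc := ct_periodic (F := Fᶜ) hq (fun n => not_congr (hF n))
  have h1 : Tendsto (fun s => 1 - (ct Fᶜ q / q + q * (Zs Set.univ s)⁻¹)) (𝓝[>] 1)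
      (𝓝 (1 - ct Fᶜ q / q)) := (bound_tendsto _ _).const_sub 1
  have h2 : 1 - ct Fᶜ q / q ≤ Lz F := by
    refine le_of_tendsto_of_tendsto h1 (Ps_tendsto hd) ?_
    filter_upwards [self_mem_nhdsWithin] with s hs
    have h3 := Ps_le hc hs
    have h4 := Ps_compl F hs
    linarith
  refine le_trans (le_of_eq ?_) h2
  have := ct_add_compl F q
  field_simp
  linarith

lemma sum_Icc_int (f : ℤ → ℝ) (L : ℕ) :
    ∑ n ∈ Finset.Icc (1 : ℤ) (L : ℤ), f n = ∑ n ∈ Finset.range L, f ((n + 1 : ℕ) : ℤ) := by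
  induction L with
  | zero => simp
  | succ L ih =>
    have : Finset.Icc (1 : ℤ) ((L + 1 : ℕ) : ℤ)
        = insert ((L + 1 : ℕ) : ℤ) (Finset.Icc (1 : ℤ) (L : ℤ)) := by
      ext x; simp only [Finset.mem_Icc, Finset.mem_insert]; omega
    rw [this, Finset.sum_insert (by simp), ih, Finset.sum_range_succ, add_comm]

/-- The natural numbers without a divisor in `B`. -/
def Fn (B : Set ℕ) : Set ℕ := {n | ∀ b ∈ B, ¬ b ∣ n}

lemma mem_Fn (B : Set ℕ) (n : ℕ) : (n : ℤ) ∈ FB B ↔ n ∈ Fn B := by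
  simp only [FB, MB, Fn, Set.mem_ofPred_eq, not_exists, not_and, Int.natCast_dvd_natCast]

lemma divClosed_Fn (B : Set ℕ) : DivClosed (Fn B) :=
  fun _ _ hb hab c hc hca => hb c hc (hca.trans hab)

lemma cnt_eq (B : Set ℕ) (L : ℕ) : cnt (FB B) L = ct (Fn B) L := by
  rw [cnt, sum_Icc_int (fun n => if n ∈ FB B then (1 : ℝ) else 0), ct]
  refine Finset.sum_congr rfl fun n _ => ?_
  simp only [mem_Fn, Set.indicator_apply]

lemma ratio_le_one (F : Set ℕ) (N : ℕ) : ct F N / N ≤ 1 :=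
  div_le_one_of_le₀ (ct_le F N) (Nat.cast_nonneg _)

lemma upper_eq (B : Set ℕ) :
    upperDensity (FB B) = atTop.limsup fun L : ℕ => ct (Fn B) L / L := by
  simp only [upperDensity, cnt_eq]

lemma ratio_bdd (F : Set ℕ) : IsBoundedUnder (· ≤ ·) atTop fun L : ℕ => ct F L / L :=
  isBoundedUnder_of ⟨1, ratio_le_one F⟩

lemma ratio_cobdd (F : Set ℕ) : IsCoboundedUnder (· ≤ ·) atTop fun L : ℕ => ct F L / L :=
  (isBoundedUnder_of ⟨0, fun N => div_nonneg (ct_nonneg F N) (Nat.cast_nonneg _)⟩ :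
    IsBoundedUnder (· ≥ ·) atTop fun L : ℕ => ct F L / L).isCoboundedUnder_le

/-- The elementary direction of Davenport-Erdős, valid for every set: the limiting zeta probability
is at most the upper density. -/
lemma Lz_le_upper (F : Set ℕ) : Lz F ≤ atTop.limsup fun L : ℕ => ct F L / L := by
  refine le_of_forall_gt_imp_ge_of_dense fun c hc => ?_
  have h := eventually_lt_of_limsup_lt hc (ratio_bdd F)
  obtain ⟨N₀, hN₀⟩ := eventually_atTop.1 h
  have hc0 : 0 < c := lt_of_le_of_lt
    (div_nonneg (ct_nonneg F N₀) (Nat.cast_nonneg _)) (hN₀ N₀ le_rfl)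
  refine Lz_le_of_ct (C := N₀) fun N => ?_
  rcases le_total N N₀ with h1 | h1
  · have : (N : ℝ) ≤ N₀ := by exact_mod_cast h1
    have := ct_le F N
    have : 0 ≤ c * N := by positivity
    linarith
  · have h2 := (hN₀ N h1).le
    rcases Nat.eq_zero_or_pos N with rfl | hN
    · simp [ct]
    rw [div_le_iff₀ (by exact_mod_cast hN)] at h2
    have : (0 : ℝ) ≤ N₀ := Nat.cast_nonneg _
    linarith

lemma upper_le_of_linear {F : Set ℕ} {c C : ℝ} (h : ∀ N, ct F N ≤ c * N + C) :
    (atTop.limsup fun L : ℕ => ct F L / L) ≤ c := by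
  have ht : Tendsto (fun L : ℕ => c + C / (L : ℝ)) atTop (𝓝 c) := by
    simpa using (tendsto_const_div_atTop_nhds_zero_nat C).const_add c
  rw [← ht.limsup_eq]
  refine limsup_le_limsup ?_ (ratio_cobdd F) ht.isBoundedUnder_le
  filter_upwards [eventually_gt_atTop 0] with L hL
  have hL' : (0 : ℝ) < L := by exact_mod_cast hL
  rw [div_le_iff₀ hL', add_mul, div_mul_cancel₀ _ hL'.ne']
  exact h L

lemma upper_mono {F G : Set ℕ} (h : F ⊆ G) :
    (atTop.limsup fun L : ℕ => ct F L / L) ≤ atTop.limsup fun L : ℕ => ct G L / L :=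
  limsup_le_limsup (Eventually.of_forall fun L =>
    div_le_div_of_nonneg_right (ct_mono h L) (Nat.cast_nonneg _)) (ratio_cobdd F) (ratio_bdd G)

/-- Davenport-Erdős: the upper density of the `B`-free numbers is the limit of their zeta
probabilities. -/
theorem upper_Fn {B : Set ℕ} (hB : 0 ∉ B) :
    (atTop.limsup fun L : ℕ => ct (Fn B) L / L) = Lz (Fn B) := by
  refine le_antisymm (le_Lz fun s hs => ?_) (Lz_le_upper _)
  set G : ℕ → Set ℕ := fun k => Fn {b ∈ B | b ≤ k} with hG
  -- `G k` is periodic, and its zeta probabilities decrease to those of `Fn B` for each fixed `s`.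
  have hlim : Tendsto (fun k => Ps (G k) s) atTop (𝓝 (Ps (Fn B) s)) := by
    refine Tendsto.div_const ?_ _
    refine tendsto_tsum_of_dominated_convergence (bound := fun n : ℕ => (n : ℝ) ^ (-s))
      (Real.summable_nat_rpow.2 (by linarith)) (fun n => ?_) (Eventually.of_forall fun k n => ?_)
    · rcases Nat.eq_zero_or_pos n with rfl | hn
      · have : ∀ F : Set ℕ, F.indicator (fun n : ℕ => (n : ℝ) ^ (-s)) 0 = 0 := by
          intro F
          rw [Set.indicator_apply, Nat.cast_zero, Real.zero_rpow (by linarith), ite_self]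
        simp only [this]
        exact tendsto_const_nhds
      refine tendsto_const_nhds.congr' ?_
      filter_upwards [eventually_ge_atTop n] with k hk
      have : n ∈ Fn B ↔ n ∈ G k := by
        constructor
        · exact fun h b hb => h b hb.1
        · exact fun h b hb hbn => h b ⟨hb, (Nat.le_of_dvd hn hbn).trans hk⟩ hbn
      simp only [Set.indicator_apply, this]
    · rw [Real.norm_of_nonneg (ind_nonneg _ _ _)]
      exact Set.indicator_le_self' (fun n _ => by positivity) n
  refine ge_of_tendsto hlim (Eventually.of_forall fun k => ?_)
  have hper : ∀ n, n + k.factorial ∈ G k ↔ n ∈ G k := by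
    intro n
    refine forall₂_congr fun b hb => not_congr ?_
    have hb0 : 0 < b := Nat.pos_of_ne_zero fun h => hB (h ▸ hb.1)
    exact Nat.dvd_add_left (Nat.dvd_factorial hb0 hb.2)
  refine (upper_mono (show Fn B ⊆ G k from fun n hn b hb => hn b hb.1)).trans ?_
  exact (upper_le_of_linear (ct_periodic k.factorial_pos hper)).trans
    (avg_le_Ps (divClosed_Fn _) k.factorial_pos hper hs)

/-! ### Logarithmic density and Behrend sets -/

/-- The partial sum `∑ 1 / n` over `n ∈ F` with `1 ≤ n ≤ N`. -/
def lg (F : Set ℕ) (N : ℕ) : ℝ :=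
  ∑ n ∈ Finset.range N, F.indicator (fun _ => (1 : ℝ)) (n + 1) * ((n : ℝ) + 1)⁻¹

lemma lg_univ (N : ℕ) : lg Set.univ N = harmonic N := by
  simp [lg, harmonic]

lemma log_tendsto : Tendsto (fun N : ℕ => Real.log N) atTop atTop :=
  Real.tendsto_log_atTop.comp tendsto_natCast_atTop_atTop

lemma lg_univ_tendsto : Tendsto (fun N : ℕ => lg Set.univ N / Real.log N) atTop (𝓝 1) := by
  have hu : Tendsto (fun N : ℕ => (Real.log N)⁻¹ + 1) atTop (𝓝 1) := by
    simpa using log_tendsto.inv_tendsto_atTop.add_const 1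
  refine tendsto_of_tendsto_of_tendsto_of_le_of_le' tendsto_const_nhds hu ?_ ?_
  · filter_upwards [eventually_gt_atTop 1] with N hN
    have hl : 0 < Real.log N := Real.log_pos (by exact_mod_cast hN)
    rw [le_div_iff₀ hl, one_mul, lg_univ]
    refine le_trans ?_ (log_add_one_le_harmonic N)
    exact Real.log_le_log (by positivity) (by push_cast; linarith)
  · filter_upwards [eventually_gt_atTop 1] with N hN
    have hl : 0 < Real.log N := Real.log_pos (by exact_mod_cast hN)
    rw [div_le_iff₀ hl, lg_univ, add_mul, inv_mul_cancel₀ hl.ne', one_mul]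
    exact harmonic_le_one_add_log N

lemma logDensity_MB_iff (A : Set ℕ) :
    logDensity (MB A) 1 ↔ Tendsto (fun N : ℕ => lg (Fn A) N / Real.log N) atTop (𝓝 0) := by
  have e : ∀ L : ℕ, (∑ n ∈ Finset.Icc (1 : ℤ) (L : ℤ), if n ∈ MB A then (n : ℝ)⁻¹ else 0)
      = lg Set.univ L - lg (Fn A) L := by
    intro L
    rw [sum_Icc_int (fun n => if n ∈ MB A then (n : ℝ)⁻¹ else 0), lg, lg,
      ← Finset.sum_sub_distrib]
    refine Finset.sum_congr rfl fun n _ => ?_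
    have h := mem_Fn A (n + 1)
    by_cases h' : n + 1 ∈ Fn A
    · have h2 : ((n + 1 : ℕ) : ℤ) ∉ MB A := h.2 h'
      rw [if_neg h2]
      simp [h']
    · have h2 : ((n + 1 : ℕ) : ℤ) ∈ MB A := by
        by_contra h3
        exact h' (h.1 h3)
      rw [if_pos h2]
      simp [h']
  simp only [logDensity, e, sub_div]
  constructor
  · intro h
    simpa using lg_univ_tendsto.sub h
  · intro h
    simpa using lg_univ_tendsto.sub h

/-- Rankin's trick: the partial sums of `1 / n` are bounded by the Dirichlet series. -/
lemma lg_le (F : Set ℕ) (N : ℕ) {s : ℝ} (hs : 1 < s) :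
    lg F N ≤ (N : ℝ) ^ (s - 1) * Zs F s := by
  have h1 : ∑ n ∈ Finset.range N, F.indicator (fun _ => (1 : ℝ)) (n + 1) * ((n : ℝ) + 1) ^ (-s)
      ≤ Zs F s := by
    refine Monotone.ge_of_tendsto (f := fun N => ∑ n ∈ Finset.range N,
      F.indicator (fun _ => (1 : ℝ)) (n + 1) * ((n : ℝ) + 1) ^ (-s)) ?_ (Zs_eq F hs) N
    refine monotone_nat_of_le_succ fun n => ?_
    rw [Finset.sum_range_succ]
    exact le_add_of_nonneg_right (mul_nonneg (Set.indicator_nonneg (fun _ _ => zero_le_one) _)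
      (by positivity))
  refine le_trans ?_ (mul_le_mul_of_nonneg_left h1 (by positivity))
  rw [lg, Finset.mul_sum]
  refine Finset.sum_le_sum fun n hn => ?_
  have hn' : (n : ℝ) + 1 ≤ N := by exact_mod_cast Finset.mem_range.1 hn
  have hp : (0 : ℝ) < (n : ℝ) + 1 := by positivity
  have h2 : ((n : ℝ) + 1)⁻¹ = ((n : ℝ) + 1) ^ (s - 1) * ((n : ℝ) + 1) ^ (-s) := by
    rw [← Real.rpow_add hp, ← Real.rpow_neg_one]; congr 1; ring
  have h3 : ((n : ℝ) + 1) ^ (s - 1) ≤ (N : ℝ) ^ (s - 1) :=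
    Real.rpow_le_rpow hp.le hn' (by linarith)
  have h4 : 0 ≤ F.indicator (fun _ => (1 : ℝ)) (n + 1) :=
    Set.indicator_nonneg (fun _ _ => zero_le_one) _
  rw [h2, mul_left_comm]
  exact mul_le_mul_of_nonneg_right h3 (by positivity)

lemma lg_nonneg (F : Set ℕ) (N : ℕ) : 0 ≤ lg F N :=
  Finset.sum_nonneg fun n _ => mul_nonneg (Set.indicator_nonneg (fun _ _ => zero_le_one) _)
    (by positivity)

/-- A set whose free numbers have zeta probabilities tending to `0` is Behrend. -/
lemma behrend_of_Lz {A : Set ℕ} (hA : ∀ a ∈ A, 0 < a) (h : Lz (Fn A) = 0) : Behrend A := by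
  refine ⟨hA, (logDensity_MB_iff A).2 ?_⟩
  -- With `s = 1 + 1 / log N` the factor `N ^ (s - 1)` is the constant `e`.
  have hs : Tendsto (fun N : ℕ => 1 + (Real.log N)⁻¹) atTop (𝓝[>] 1) := by
    rw [tendsto_nhdsWithin_iff]
    constructor
    · simpa using log_tendsto.inv_tendsto_atTop.const_add 1
    · filter_upwards [eventually_gt_atTop 1] with N hN
      have hl : 0 < Real.log N := Real.log_pos (by exact_mod_cast hN)
      have := inv_pos.2 hl
      simp only [Set.mem_Ioi]
      linarith
  have h1 := ((Zs_univ_asymp.mul (Ps_tendsto (divClosed_Fn A))).comp hs).const_mul (Real.exp 1)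
  rw [h, mul_zero, mul_zero] at h1
  refine tendsto_of_tendsto_of_tendsto_of_le_of_le' tendsto_const_nhds h1 ?_ ?_
  · filter_upwards [eventually_gt_atTop 1] with N hN
    exact div_nonneg (lg_nonneg _ _) (Real.log_pos (by exact_mod_cast hN)).le
  · filter_upwards [eventually_gt_atTop 1] with N hN
    have hl : 0 < Real.log N := Real.log_pos (by exact_mod_cast hN)
    have hs1 : 1 < 1 + (Real.log N)⁻¹ := by have := inv_pos.2 hl; linarith
    have h2 := lg_le (Fn A) N hs1
    have h3 : (N : ℝ) ^ (1 + (Real.log N)⁻¹ - 1) = Real.exp 1 := by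
      rw [Real.rpow_def_of_pos (by positivity), add_sub_cancel_left, mul_inv_cancel₀ hl.ne']
    rw [h3] at h2
    rw [div_le_iff₀ hl]
    refine h2.trans (le_of_eq ?_)
    have hz := (Zs_univ_pos hs1).ne'
    simp only [Function.comp_apply, Ps, add_sub_cancel_left]
    generalize Zs Set.univ (1 + (Real.log (N : ℝ))⁻¹) = z at hz
    generalize Zs (Fn A) (1 + (Real.log (N : ℝ))⁻¹) = y
    field_simp

/-- A progression `1 mod P` has positive logarithmic density, so a Behrend set has a multiple
in it. -/
lemma not_behrend_of_progression {A : Set ℕ} {P : ℕ} (hP : 0 < P)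
    (h : ∀ n, P * n + 1 ∈ Fn A) : ¬ Behrend A := by
  rintro ⟨-, hb⟩
  rw [logDensity_MB_iff] at hb
  have hP' : (0 : ℝ) < P := by exact_mod_cast hP
  have hlow : ∀ M, (P : ℝ)⁻¹ * lg Set.univ M ≤ lg (Fn A) (P * M) := by
    intro M
    induction M with
    | zero => simp [lg]
    | succ M ih =>
      have h1 : lg (Fn A) (P * M) + ((P * M : ℕ) + 1 : ℝ)⁻¹ ≤ lg (Fn A) (P * (M + 1)) := by
        have h2 : lg (Fn A) (P * M + 1) = lg (Fn A) (P * M) + ((P * M : ℕ) + 1 : ℝ)⁻¹ := by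
          rw [lg, Finset.sum_range_succ, Set.indicator_of_mem (h M), one_mul, lg]
        rw [← h2]
        refine Finset.sum_le_sum_of_subset_of_nonneg (Finset.range_subset_range.2 ?_)
          fun n _ _ => mul_nonneg (Set.indicator_nonneg (fun _ _ => zero_le_one) _) (by positivity)
        rw [mul_add, mul_one]; omega
      have h3 : lg Set.univ (M + 1) = lg Set.univ M + ((M : ℝ) + 1)⁻¹ := by
        rw [lg, Finset.sum_range_succ, lg]; simp
      have h4 : (P : ℝ)⁻¹ * ((M : ℝ) + 1)⁻¹ ≤ ((P * M : ℕ) + 1 : ℝ)⁻¹ := by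
        rw [← mul_inv]
        refine inv_anti₀ (by positivity) ?_
        have : (1 : ℝ) ≤ P := by exact_mod_cast hP
        push_cast
        linarith
      rw [h3, mul_add]
      linarith
  have ht : Tendsto (fun M : ℕ => P * M) atTop atTop :=
    tendsto_id.const_mul_atTop' hP
  have h0 := hb.comp ht
  have : (2 * (P : ℝ))⁻¹ ≤ 0 := by
    refine ge_of_tendsto h0 ?_
    filter_upwards [eventually_ge_atTop P, eventually_gt_atTop 1] with M hM hM1
    have hl : 0 < Real.log M := Real.log_pos (by exact_mod_cast hM1)
    have hM' : (P : ℝ) ≤ M := by exact_mod_cast hM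
    have hM0 : (0 : ℝ) < M := by positivity
    have h5 : Real.log ((P * M : ℕ) : ℝ) ≤ 2 * Real.log M := by
      push_cast
      rw [Real.log_mul hP'.ne' hM0.ne']
      have := Real.log_le_log hP' hM'
      linarith
    have h6 : 0 < Real.log ((P * M : ℕ) : ℝ) := by
      refine hl.trans_le (Real.log_le_log hM0 ?_)
      exact_mod_cast Nat.le_mul_of_pos_left M hP
    have h7 : Real.log M ≤ lg Set.univ M := by
      rw [lg_univ]
      refine le_trans ?_ (log_add_one_le_harmonic M)
      exact Real.log_le_log hM0 (by push_cast; linarith)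
    simp only [Function.comp_apply]
    rw [le_div_iff₀ h6]
    calc (2 * (P : ℝ))⁻¹ * Real.log ((P * M : ℕ) : ℝ)
        ≤ (2 * (P : ℝ))⁻¹ * (2 * Real.log M) := by gcongr
      _ = (P : ℝ)⁻¹ * Real.log M := by field_simp
      _ ≤ (P : ℝ)⁻¹ * lg Set.univ M := by gcongr
      _ ≤ _ := hlow M
  have : 0 < (2 * (P : ℝ))⁻¹ := by positivity
  linarith

/-- A maximal pairwise coprime subset of a Behrend set not containing `1` is infinite: otherwise
the product `P` of its elements shares a prime with every element of the set, so that no element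
of the set divides a number congruent to `1` modulo `P`. -/
lemma exists_coprime {A : Set ℕ} (hA : Behrend A) (h1 : 1 ∉ A) :
    ∃ A' ⊆ A, A'.Infinite ∧ A'.Pairwise Nat.Coprime := by
  obtain ⟨M, hM⟩ := zorn_subset {S : Set ℕ | S ⊆ A ∧ S.Pairwise Nat.Coprime} (by
    intro c hc hchain
    refine ⟨⋃₀ c, ⟨Set.sUnion_subset fun s hs => (hc hs).1, ?_⟩,
      fun s hs => Set.subset_sUnion_of_mem hs⟩
    exact (Set.pairwise_sUnion hchain.directedOn).2 fun s hs => (hc hs).2)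
  refine ⟨M, hM.prop.1, ?_, hM.prop.2⟩
  intro hfin
  have hprod : ∀ a ∈ M, a ∣ ∏ x ∈ hfin.toFinset, x := fun a ha =>
    Finset.dvd_prod_of_mem (fun x => x) (hfin.mem_toFinset.2 ha)
  refine not_behrend_of_progression (P := ∏ x ∈ hfin.toFinset, x)
    (Finset.prod_pos fun a ha => hA.1 a (hM.prop.1 (hfin.mem_toFinset.1 ha))) ?_ hA
  intro n a ha hdvd
  have hcop : Nat.Coprime a (∏ x ∈ hfin.toFinset, x) := by
    have h2 : Nat.Coprime ((∏ x ∈ hfin.toFinset, x) * n + 1) (∏ x ∈ hfin.toFinset, x) := by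
      simp
    exact h2.coprime_dvd_left hdvd
  have haM : a ∈ M := by
    have hle : insert a M ⊆ M := by
      refine hM.le_of_ge ⟨Set.insert_subset ha hM.prop.1, ?_⟩ (Set.subset_insert a M)
      refine hM.prop.2.insert fun b hb _ => ?_
      have := hcop.coprime_dvd_right (hprod b hb)
      exact ⟨this, this.symm⟩
    exact hle (Set.mem_insert a M)
  have : a = 1 := Nat.eq_one_of_dvd_one (by
    have := Nat.dvd_gcd dvd_rfl (hprod a haM)
    rwa [hcop] at this)
  exact h1 (this ▸ ha)

/-! ### The comparison of `B` with `Bstar B` -/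

lemma exists_prim {S : Set ℕ} (hS : 0 ∉ S) {b : ℕ} (hb : b ∈ S) : ∃ c ∈ primPart S, c ∣ b := by
  induction b using Nat.strong_induction_on with
  | _ b ih =>
    by_cases h : ∀ b' ∈ S, b' ∣ b → b' = b
    · exact ⟨b, ⟨hb, h⟩, dvd_rfl⟩
    · push Not at h
      obtain ⟨b', hb', hd, hne⟩ := h
      have hb0 : 0 < b := Nat.pos_of_ne_zero fun h => hS (h ▸ hb)
      obtain ⟨c, hc, hcd⟩ := ih b' (lt_of_le_of_ne (Nat.le_of_dvd hb0 hd) hne) hb'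
      exact ⟨c, hc, hcd.trans hd⟩

lemma MB_prim {S : Set ℕ} (hS : 0 ∉ S) : MB (primPart S) = MB S := by
  ext n
  constructor
  · rintro ⟨b, hb, hn⟩
    exact ⟨b, hb.1, hn⟩
  · rintro ⟨b, hb, hn⟩
    obtain ⟨c, hc, hcb⟩ := exists_prim hS hb
    exact ⟨c, hc, (Int.natCast_dvd_natCast.2 hcb).trans hn⟩

lemma zero_notMem_D {B : Set ℕ} (hB : 0 ∉ B) : 0 ∉ B ∪ Dset B := by
  rintro (h | ⟨A, hA, -, -, h⟩)
  · exact hB h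
  · obtain ⟨a, ha⟩ := hA.nonempty
    have := h a ha
    rw [zero_mul] at this
    exact hB this

/-- If `c * A ⊆ B` with `A` Behrend, then `c ∈ B` when `1 ∈ A`, and otherwise an infinite coprime
subset of `A` shows `c ∈ Dset B`. -/
lemma Cset_sub (B : Set ℕ) : Cset B ⊆ B ∪ Dset B := by
  rintro c ⟨A, hA, h⟩
  by_cases h1 : 1 ∈ A
  · left
    have := h 1 h1
    rwa [mul_one] at this
  · obtain ⟨A', hs, hi, hp⟩ := exists_coprime hA h1
    exact Or.inr ⟨A', hi, fun a ha => hA.1 a (hs ha), hp, fun a ha => h a (hs ha)⟩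

/-- Adjoining to `B` a number `d` which is not a multiple of an element of `Cset B` lowers the
limiting zeta probability of the free set. -/
lemma Lz_lt {B : Set ℕ} (hB : 0 ∉ B) {d : ℕ} (hd0 : 0 < d) (hC : ∀ c ∈ Cset B, ¬ c ∣ d) :
    Lz (Fn (B ∪ {d})) < Lz (Fn B) := by
  set T : Set ℕ := {m | d * m ∈ Fn B} with hT
  -- If `b ∣ d * m` with `b ∈ B` and `e = gcd b d`, then `b / e` divides `m` and `e * (b / e) ∈ B`.
  have hsub : (⋂ e ∈ d.divisors, Fn {a | e * a ∈ B}) ⊆ T := by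
    intro m hm b hb hbd
    simp only [Set.mem_iInter] at hm
    have hg : Nat.gcd b d ∣ d := Nat.gcd_dvd_right b d
    obtain ⟨a, ha⟩ := Nat.gcd_dvd_left b d
    refine hm (Nat.gcd b d) (Nat.mem_divisors.2 ⟨hg, hd0.ne'⟩) a ?_ ?_
    · change Nat.gcd b d * a ∈ B
      rwa [← ha]
    · have hgp : 0 < Nat.gcd b d := Nat.gcd_pos_of_pos_right _ hd0
      have e : b / Nat.gcd b d = a := Nat.div_eq_of_eq_mul_right hgp ha
      rw [← e]
      have hcop : Nat.Coprime (b / Nat.gcd b d) (d / Nat.gcd b d) :=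
        Nat.coprime_div_gcd_div_gcd hgp
      refine hcop.dvd_of_dvd_mul_left (Nat.dvd_of_mul_dvd_mul_left hgp ?_)
      rw [Nat.mul_div_cancel' (Nat.gcd_dvd_left b d), ← mul_assoc, Nat.mul_div_cancel' hg]
      exact hbd
  have hTpos : 0 < Lz T := by
    refine lt_of_lt_of_le (Lz_biInter_pos _ _ (fun e _ => divClosed_Fn _) fun e he => ?_)
      (Lz_mono hsub)
    refine lt_of_le_of_ne (Lz_nonneg _) fun h => ?_
    have hdvd := Nat.dvd_of_mem_divisors he
    refine hC e ⟨_, behrend_of_Lz (A := {a | e * a ∈ B}) (fun a ha => ?_) h.symm,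
      fun a ha => ha⟩ hdvd
    refine Nat.pos_of_ne_zero fun h0 => ?_
    have ha' : e * a ∈ B := ha
    rw [h0, mul_zero] at ha'
    exact hB ha'
  have hsplit : ∀ s, 1 < s →
      Ps (Fn B) s = Ps (Fn (B ∪ {d})) s + (d : ℝ) ^ (-s) * Ps T s := by
    intro s hs
    have h1 : (d : ℝ) ^ (-s) * Zs T s = Zs (Fn B ∩ {n | d ∣ n}) s := by
      rw [Zs, Zs, ← tsum_mul_left]
      have hinj : Function.Injective fun m : ℕ => d * m :=
        fun x y hxy => Nat.eq_of_mul_eq_mul_left hd0 hxy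
      rw [← hinj.tsum_eq (f := (Fn B ∩ {n | d ∣ n}).indicator fun n : ℕ => (n : ℝ) ^ (-s))]
      · refine tsum_congr fun m => ?_
        have : d * m ∈ Fn B ∩ {n | d ∣ n} ↔ m ∈ T :=
          ⟨fun h => h.1, fun h => ⟨h, dvd_mul_right d m⟩⟩
        simp only [Set.indicator_apply, this]
        split_ifs
        · rw [Nat.cast_mul, Real.mul_rpow (by positivity) (by positivity)]
        · rw [mul_zero]
      · intro n hn
        obtain ⟨m, hm⟩ := (Set.mem_of_indicator_ne_zero hn).2
        exact ⟨m, hm.symm⟩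
    have h2 : Zs (Fn B) s = Zs (Fn (B ∪ {d})) s + Zs (Fn B ∩ {n | d ∣ n}) s := by
      rw [Zs, Zs, Zs, ← (ind_summable _ hs).tsum_add (ind_summable _ hs)]
      refine tsum_congr fun n => ?_
      have e1 : n ∈ Fn (B ∪ {d}) ↔ n ∈ Fn B ∧ ¬ d ∣ n := by
        constructor
        · exact fun h => ⟨fun b hb => h b (Or.inl hb), h d (Or.inr rfl)⟩
        · rintro ⟨h, h'⟩ b (hb | rfl)
          · exact h b hb
          · exact h'
      have e2 : n ∈ Fn B ∩ {n | d ∣ n} ↔ n ∈ Fn B ∧ d ∣ n := Iff.rfl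
      simp only [Set.indicator_apply, e1, e2]
      by_cases h : n ∈ Fn B <;> by_cases h' : d ∣ n <;> simp [h, h']
    rw [Ps, h2, ← h1, add_div, mul_div_assoc, Ps, Ps]
  have hd' : (0 : ℝ) < d := by exact_mod_cast hd0
  have hge : Lz (Fn (B ∪ {d})) + (d : ℝ) ^ (-2 : ℝ) * Lz T ≤ Lz (Fn B) := by
    refine ge_of_tendsto (Ps_tendsto (divClosed_Fn B)) ?_
    filter_upwards [Ioc_mem_nhdsGT (one_lt_two : (1 : ℝ) < 2)] with s hs
    rw [hsplit s hs.1]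
    have h3 : (d : ℝ) ^ (-2 : ℝ) ≤ (d : ℝ) ^ (-s) :=
      Real.rpow_le_rpow_of_exponent_le (by exact_mod_cast hd0) (by linarith [hs.2])
    exact add_le_add (Lz_le _ hs.1)
      (mul_le_mul h3 (Lz_le _ hs.1) (Lz_nonneg _) (by positivity))
  have : 0 < (d : ℝ) ^ (-2 : ℝ) * Lz T := by positivity
  linarith

/-- if `η' ≠ η*` then `d̄(F_𝓑) > d̄(F_{𝓑*})`. -/
theorem statement17 (B : Set ℕ) (hB : 0 ∉ B) (hne : etaPrime B ≠ etaStar B) :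
    upperDensity (FB (Bstar B)) < upperDensity (FB B) := by
  have hD0 := zero_notMem_D hB
  have hC0 : 0 ∉ B ∪ Cset B := by
    rintro (h | h)
    · exact hB h
    · exact hD0 (Cset_sub B h)
  have hMM : MB (B ∪ Cset B) ⊆ MB (B ∪ Dset B) := by
    rintro n ⟨b, hb | hb, hn⟩
    · exact ⟨b, Or.inl hb, hn⟩
    · exact ⟨b, Cset_sub B hb, hn⟩
  have hMne : ¬ MB (B ∪ Dset B) ⊆ MB (B ∪ Cset B) := by
    intro hsub
    have heq := hMM.antisymm hsub
    refine hne ?_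
    funext n
    simp only [etaPrime, etaStar, eta, FB, Bprime, Bstar, MB_prim hC0, MB_prim hD0, heq]
  obtain ⟨n, ⟨d, hd, hdn⟩, hn⟩ := Set.not_subset.1 hMne
  have hd0 : 0 < d := Nat.pos_of_ne_zero fun h => hD0 (h ▸ hd)
  have hC : ∀ c ∈ Cset B, ¬ c ∣ d := fun c hc hcd =>
    hn ⟨c, Or.inr hc, (Int.natCast_dvd_natCast.2 hcd).trans hdn⟩
  have hBd : 0 ∉ B ∪ {d} := by
    rintro (h | h)
    · exact hB h
    · exact hd0.ne h
  rw [upper_eq, upper_eq, upper_Fn hB]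
  refine lt_of_le_of_lt ?_ (Lz_lt hB hd0 hC)
  rw [← upper_Fn hBd]
  refine upper_mono fun m hm b hb hbm => ?_
  have hbD : b ∈ B ∪ Dset B := by
    rcases hb with hb | hb
    · exact Or.inl hb
    · have hb' : b = d := hb
      exact hb' ▸ hd
  obtain ⟨c, hc, hcb⟩ := exists_prim hD0 hbD
  exact hm c hc (hcb.trans hbm)

end BFree
end
end
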